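/- arXiv:2006.05511 — 2 statements merged into one kernel-verified Lean document; each statement's English description precedes it below -/
import Mathlib

section
/- Let n be odd and let G be a connected well-covered unicyclic graph of order n. If 5 ≤ n ≤ 7, then ξ(C_n) ≤ ξ(G) ≤ ξ(M_n). If n ≥ 9, then ξ(H) ≤ ξ(G) ≤ ξ(M_n) for every graph H of order n in the family S_P. -/
open Polynomial SimpleGraph

/-- A finset of vertices is independent: pairwise nonadjacent. -/
def IsIndepFinset {V : Type*} (G : SimpleGraph V) (s : Finset V) : Prop :=
  ∀ u ∈ s, ∀ v ∈ s, ¬ G.Adj u v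

open Classical in
/-- The independence polynomial of a finite graph, with real coefficients. -/
noncomputable def indepPoly {V : Type*} [Fintype V] (G : SimpleGraph V) : Polynomial ℝ :=
  ∑ s : Finset V, if IsIndepFinset G s then (X : Polynomial ℝ) ^ s.card else 0

/-- `xi G` : the largest real root of the independence polynomial of `G`. -/
noncomputable def xi {V : Type*} [Fintype V] (G : SimpleGraph V) : ℝ :=
  sSup {x : ℝ | (indepPoly G).eval x = 0}

/-- `Pre H G` (`H ⪯ G`) : `I(H,x) ≥ I(G,x)` for all `x ∈ [ξ(G), 0]`. -/
def Pre {V W : Type*} [Fintype V] [Fintype W] (H : SimpleGraph W) (G : SimpleGraph V) : Prop :=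
  ∀ x ∈ Set.Icc (xi G) 0, (indepPoly G).eval x ≤ (indepPoly H).eval x

/-- `SPre H G` (`H ≺ G`). -/
def SPre {V W : Type*} [Fintype V] [Fintype W] (H : SimpleGraph W) (G : SimpleGraph V) : Prop :=
  Pre H G ∧ indepPoly H ≠ indepPoly G

open Classical in
/-- A graph is well-covered if all maximal independent sets have the same size. -/
def WellCovered {V : Type*} (G : SimpleGraph V) : Prop :=
  ∀ s t : Finset V,
    IsIndepFinset G s → (∀ v ∉ s, ¬ IsIndepFinset G (insert v s)) →
    IsIndepFinset G t → (∀ v ∉ t, ¬ IsIndepFinset G (insert v t)) →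
    s.card = t.card

/-- A connected unicyclic graph: connected with as many edges as vertices. -/
def Unicyclic {V : Type*} [Fintype V] (G : SimpleGraph V) : Prop :=
  G.Connected ∧ G.edgeSet.ncard = Fintype.card V

/-- The graph star (corona with `K₁`) of `G`: each vertex `inl v` gets a pendant
vertex `inr v`. -/
def corona {V : Type*} (G : SimpleGraph V) : SimpleGraph (V ⊕ V) :=
  SimpleGraph.fromRel (fun a b =>
    match a, b with
    | Sum.inl u, Sum.inl v => G.Adj u v
    | Sum.inl u, Sum.inr v => u = v
    | _, _ => False)

/-- `Ugraph n` (`U_n`, `n ≥ 3`): a triangle `0,1,2` with `n - 3` pendant vertices attached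
to vertex `0`. -/
def Ugraph (n : ℕ) : SimpleGraph (Fin n) :=
  SimpleGraph.fromRel (fun i j => i.val = 0 ∨ (i.val = 1 ∧ j.val = 2))

/-- `Dgraph n` (`D_n`, `n ≥ 4`): a path `0,1,...,n-1` plus the chord `{0,2}`, i.e. a
triangle with a path on `n - 3` vertices attached. -/
def Dgraph (n : ℕ) : SimpleGraph (Fin n) :=
  SimpleGraph.fromRel (fun i j => j.val = i.val + 1 ∨ (i.val = 0 ∧ j.val = 2))

/-- `starGraph n` (`S_n = K_{1,n-1}`): vertex `0` adjacent to all other vertices. -/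
def starGraph (n : ℕ) : SimpleGraph (Fin n) :=
  SimpleGraph.fromRel (fun i _ => i.val = 0)

/-- `Mgraph n` (`M_n`, odd `n ≥ 5`): a triangle `0,1,2` with `(n-3)/2` paths of length two
attached at vertex `0`; the middle vertices are the odd indices `3,5,...,n-2` and the leaf
attached to middle vertex `i` is `i + 1`. -/
def Mgraph (n : ℕ) : SimpleGraph (Fin n) :=
  SimpleGraph.fromRel (fun i j =>
    (i.val = 0 ∧ (j.val ≤ 2 ∨ j.val % 2 = 1)) ∨ (i.val = 1 ∧ j.val = 2) ∨
    (i.val % 2 = 1 ∧ 3 ≤ i.val ∧ j.val = i.val + 1))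

/-- `SPgraph g k ℓ` (`G(g,k,ℓ)`, for `g ∈ {3,5}` and `k + ℓ ≥ 1`): a cycle on the vertices
`0,...,g-1`, a copy of `P_k*` on the vertices `g,...,g+2k-1` (path vertices at even offsets,
each followed by its pendant vertex) joined to the cycle vertex `0` by an edge to the
path end `g`, and a copy of `P_ℓ*` on the vertices `g+2k,...,g+2k+2ℓ-1` joined to the cycle
vertex `2` by an edge to the path end `g+2k`. -/
def SPgraph (g k ℓ : ℕ) : SimpleGraph (Fin (g + 2*k + 2*ℓ)) :=
  SimpleGraph.fromRel (fun i j =>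
    (i.val < g ∧ j.val < g ∧ (j.val = i.val + 1 ∨ (i.val = 0 ∧ j.val = g - 1))) ∨
    (i.val = 0 ∧ 0 < k ∧ j.val = g) ∨
    (g ≤ i.val ∧ i.val < g + 2*k ∧ (i.val - g) % 2 = 0 ∧
      (j.val = i.val + 1 ∨ (j.val = i.val + 2 ∧ j.val < g + 2*k))) ∨
    (i.val = 2 ∧ 0 < ℓ ∧ j.val = g + 2*k) ∨
    (g + 2*k ≤ i.val ∧ (i.val - (g + 2*k)) % 2 = 0 ∧
      (j.val = i.val + 1 ∨ j.val = i.val + 2)))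

/-- `Gtree n` (`G_{2n}`, `n ≥ 5`): the tree on `2n` vertices with path `v_1 … v_n` at
indices `0,…,n-1`, `z_1` at index `n`, `y_1, y_2` at `n+1, n+2`, `x_1, x_2` at `n+3, n+4`
(with `v_3 z_1`, `v_3 y_1`, `y_1 y_2`, `v_5 x_1`, `x_1 x_2` edges), and pendant vertices
`w_j` at index `n + j - 1` attached to `v_j` for `6 ≤ j ≤ n`. -/
def Gtree (n : ℕ) : SimpleGraph (Fin (2*n)) :=
  SimpleGraph.fromRel (fun a b =>
    (a.val + 1 = b.val ∧ b.val < n) ∨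
    (a.val = 2 ∧ (b.val = n ∨ b.val = n + 1)) ∨
    (a.val = n + 1 ∧ b.val = n + 2) ∨
    (a.val = 4 ∧ b.val = n + 3) ∨
    (a.val = n + 3 ∧ b.val = n + 4) ∨
    (5 ≤ a.val ∧ a.val < n ∧ b.val = n + a.val))

/-!
Pendant paths `w - u - v` of order two can be removed from `G` one at a time, preserving the
hypotheses, until only a cycle remains. Well-coveredness forces this cycle to be `C₃`, `C₅` or `C₇`,
and `G = C₇` in the last case. Since `v` is a leaf, reattaching `u` and `v` to a graph acts on
independence polynomials like attaching the single leaf `u`, up to a factor `1 + x` and the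
substitution `x ↦ x / (1 + x)`. Hence `I(G, x) = (1 + x) ^ (m - 1) * I(T, x / (1 + x))` for a tree
`T` of order `m = (n + 1) / 2` unless `G = C₇`. For `C₅` and the graphs in `S_P` the tree is a path,
for `M_n` it is a star, and `C₇` differs from the path case by the cubic term `-x ^ 3`. Among the
trees of a given order the path has the least and the star the greatest `ξ`, by induction over
rooted trees with bounds on the ratio of `I(T - N[r])` to `I(T - r)`. Since `I(G, 0) = 1`, the
comparison `ξ(H) ≤ ξ(G)` follows once positivity of `I(G, ·)` on `[z, 0]` implies `0 < I(H, z)`.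
-/

section IndepSum

variable {V W R : Type*} [CommSemiring R] {G : SimpleGraph V} {H : SimpleGraph W}
  {S T : Finset V} {u v : V}

open Classical in
/-- The value at `x` of the independence polynomial of the subgraph of `G` induced on `S`. -/
noncomputable def indepSum (G : SimpleGraph V) (S : Finset V) (x : R) : R :=
  ∑ s ∈ S.powerset with IsIndepFinset G s, x ^ s.card

theorem eval_indepPoly [Fintype V] (G : SimpleGraph V) (x : ℝ) :
    (indepPoly G).eval x = indepSum G Finset.univ x := by
  simp only [indepPoly, indepSum, eval_finsetSum, Finset.powerset_univ, Finset.sum_filter]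
  exact Finset.sum_congr rfl fun s _ ↦ by split_ifs <;> simp

theorem isIndepFinset_map_iff (f : G ↪g H) :
    IsIndepFinset H (S.map f.toEmbedding) ↔ IsIndepFinset G S := by
  simp [IsIndepFinset]

theorem indepSum_map (f : G ↪g H) (S : Finset V) (x : R) :
    indepSum H (S.map f.toEmbedding) x = indepSum G S x := by
  classical
  rw [indepSum, indepSum, Finset.sum_filter, Finset.sum_filter]
  refine (Finset.sum_bij (fun s _ ↦ s.map f.toEmbedding) (fun s hs ↦ ?_)
    (fun s _ t _ h ↦ Finset.map_injective _ h) (fun t ht ↦ ?_) fun s _ ↦ ?_).symm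
  · exact Finset.mem_powerset.2 (Finset.map_subset_map.2 (Finset.mem_powerset.1 hs))
  · obtain ⟨s, hs, rfl⟩ := Finset.subset_map_iff.1 (Finset.mem_powerset.1 ht)
    exact ⟨s, Finset.mem_powerset.2 hs, rfl⟩
  · simp only [isIndepFinset_map_iff, Finset.card_map]

@[simp]
theorem indepSum_empty (x : R) : indepSum G ∅ x = 1 := by
  rw [indepSum, Finset.sum_filter]
  simp [IsIndepFinset]

theorem indepSum_singleton (v : V) (x : R) : indepSum G {v} x = 1 + x := by
  classical
  rw [indepSum, Finset.sum_filter, ← insert_empty_eq,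
    Finset.sum_powerset_insert (Finset.notMem_empty v)]
  simp [IsIndepFinset]

variable [DecidableEq V]

theorem isIndepFinset_insert_iff :
    IsIndepFinset G (insert v S) ↔ IsIndepFinset G S ∧ ∀ u ∈ S, ¬ G.Adj v u := by
  simp only [IsIndepFinset, Finset.forall_mem_insert, SimpleGraph.irrefl, not_false_eq_true,
    true_and, G.adj_comm _ v]
  grind

open Classical in
theorem indepSum_insert (hv : v ∉ S) (x : R) :
    indepSum G (insert v S) x = indepSum G S x + x * indepSum G {u ∈ S | ¬ G.Adj v u} x := by
  have hfilter : {s ∈ S.powerset | IsIndepFinset G (insert v s)} =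
      {s ∈ ({u ∈ S | ¬ G.Adj v u} : Finset V).powerset | IsIndepFinset G s} := by
    ext s
    simp only [Finset.mem_filter, Finset.mem_powerset, isIndepFinset_insert_iff,
      Finset.subset_iff]
    grind
  rw [indepSum, Finset.sum_filter, Finset.sum_powerset_insert hv, ← Finset.sum_filter,
    ← Finset.sum_filter, hfilter, indepSum, indepSum, Finset.mul_sum]
  refine congrArg _ (Finset.sum_congr rfl fun s hs ↦ ?_)
  rw [Finset.card_insert_of_notMem (by grind), pow_succ']

open Classical in
theorem indepSum_eq_erase_add (hv : v ∈ S) (x : R) :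
    indepSum G S x =
      indepSum G (S.erase v) x + x * indepSum G {u ∈ S.erase v | ¬ G.Adj v u} x := by
  rw [← indepSum_insert (Finset.notMem_erase v S), Finset.insert_erase hv]

theorem indepSum_union (hdisj : Disjoint S T) (h : ∀ a ∈ S, ∀ b ∈ T, ¬ G.Adj a b) (x : R) :
    indepSum G (S ∪ T) x = indepSum G S x * indepSum G T x := by
  classical
  induction T using Finset.strongInduction with | H T ih =>
  rcases T.eq_empty_or_nonempty with rfl | ⟨v, hv⟩
  · simp
  have hvS : v ∉ S := fun hvS ↦ Finset.disjoint_left.1 hdisj hvS hv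
  have hlt : ∀ T' ⊆ T.erase v, indepSum G (S ∪ T') x = indepSum G S x * indepSum G T' x :=
    fun T' hT' ↦ ih T' (hT'.trans_ssubset (Finset.erase_ssubset hv))
      (hdisj.mono_right (hT'.trans (Finset.erase_subset _ _))) (by grind)
  have hfilter : {u ∈ S ∪ T.erase v | ¬ G.Adj v u} = S ∪ {u ∈ T.erase v | ¬ G.Adj v u} := by
    grind [G.adj_comm]
  rw [indepSum_eq_erase_add (Finset.mem_union_right S hv), indepSum_eq_erase_add hv,
    Finset.erase_union_distrib, Finset.erase_eq_of_notMem hvS, hfilter, hlt _ subset_rfl,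
    hlt _ (Finset.filter_subset _ _)]
  ring

theorem indepSum_insert_of_forall_not_adj (hv : v ∉ S) (h : ∀ u ∈ S, ¬ G.Adj v u) (x : R) :
    indepSum G (insert v S) x = (1 + x) * indepSum G S x := by
  classical rw [indepSum_insert hv, Finset.filter_true_of_mem h, add_mul, one_mul]

open Classical in
theorem indepSum_insert_insert_of_pendant (hu : u ∉ S) (hv : v ∉ S) (huv : G.Adj u v)
    (h : ∀ w ∈ S, ¬ G.Adj v w) (x : R) :
    indepSum G (insert u (insert v S)) x =
      (1 + x) * indepSum G S x + x * indepSum G {w ∈ S | ¬ G.Adj u w} x := by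
  rw [indepSum_insert (by grind [huv.ne]), indepSum_insert_of_forall_not_adj hv h,
    Finset.filter_insert, if_neg (not_not.2 huv)]

end IndepSum

section LargestRoot

open Set Topology Filter

variable {V W : Type*} {G : SimpleGraph V} {H : SimpleGraph W} {S T : Finset V}

theorem continuous_indepSum (G : SimpleGraph V) (S : Finset V) :
    Continuous fun x : ℝ ↦ indepSum G S x := by
  unfold indepSum
  fun_prop

theorem indepSum_zero (G : SimpleGraph V) (S : Finset V) : indepSum G S (0 : ℝ) = 1 := by
  classical
  induction S using Finset.induction with
  | empty => exact indepSum_empty 0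
  | insert v S hv ih => rw [indepSum_insert hv, ih, zero_mul, add_zero]

theorem indepSum_pos_of_nonneg (G : SimpleGraph V) (S : Finset V) {x : ℝ} (hx : 0 ≤ x) :
    0 < indepSum G S x := by
  classical
  rw [indepSum, Finset.sum_filter]
  refine Finset.sum_pos' (fun s _ ↦ by positivity) ⟨∅, Finset.empty_mem_powerset S, ?_⟩
  simp [IsIndepFinset]

/-- A vertex-deleted subgraph has no root to the right of the roots of the graph: at the largest
point where `I(S - v) ≤ 0`, the induction hypothesis gives `0 ≤ I(S - N[v])`, and hence `I(S) ≤ 0`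
by `I(S) = I(S - v) + x I(S - N[v])`. -/
theorem indepSum_pos_of_subset {z : ℝ} (hS : ∀ x ∈ Icc z 0, 0 < indepSum G S x) (hTS : T ⊆ S) :
    ∀ x ∈ Icc z 0, 0 < indepSum G T x := by
  classical
  induction S using Finset.strongInduction generalizing z T with | H S ih =>
  rcases hTS.eq_or_ssubset with rfl | hTS
  · exact hS
  obtain ⟨v, hvS, hvT⟩ := Finset.exists_of_ssubset hTS
  have hv := Finset.erase_ssubset hvS
  suffices herase : ∀ x ∈ Icc z 0, 0 < indepSum G (S.erase v) x from
    ih _ hv herase (Finset.subset_erase.2 ⟨hTS.subset, hvT⟩)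
  by_contra! ⟨w, hw, hw0⟩
  obtain ⟨y, ⟨hy, hy0⟩, hmax⟩ :=
    (isCompact_Icc (a := z) (b := (0 : ℝ)).inter_right <| isClosed_le
      (continuous_indepSum G (S.erase v)) continuous_const).exists_isGreatest ⟨w, hw, hw0⟩
  have hy_neg : y < 0 := hy.2.lt_of_ne fun h ↦ by
    rw [mem_ofPred_eq, h, indepSum_zero] at hy0
    exact one_pos.not_ge hy0
  have hpos : ∀ x ∈ Ioc y 0, 0 < indepSum G {u ∈ S.erase v | ¬ G.Adj v u} x := fun x hx ↦ by
    refine ih _ hv (z := x) (fun t ht ↦ ?_) (Finset.filter_subset _ _) x ⟨le_rfl, hx.2⟩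
    by_contra! ht0
    exact (hx.1.trans_le ht.1).not_ge (hmax ⟨⟨hy.1.trans (hx.1.le.trans ht.1), ht.2⟩, ht0⟩)
  have hnonneg : 0 ≤ indepSum G {u ∈ S.erase v | ¬ G.Adj v u} y :=
    ge_of_tendsto ((continuous_indepSum G _).tendsto y |>.mono_left nhdsWithin_le_nhds)
      (mem_of_superset (Ioc_mem_nhdsGT hy_neg) fun x hx ↦ (hpos x hx).le)
  have hSy := hS y hy
  rw [indepSum_eq_erase_add hvS] at hSy
  exact hSy.not_ge (add_nonpos hy0 (mul_nonpos_of_nonpos_of_nonneg hy.2 hnonneg))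

variable [Fintype V] [Fintype W]

theorem exists_root_mem_Ico_of_nonpos {w : ℝ} (hw : indepSum G .univ w ≤ 0) :
    ∃ x ∈ Ico w 0, (indepPoly G).eval x = 0 := by
  have hw0 : w < 0 := not_le.1 fun h ↦ (indepSum_pos_of_nonneg G .univ h).not_ge hw
  obtain ⟨x, hx, hx0⟩ := intermediate_value_Icc hw0.le
    (continuous_indepSum G .univ).continuousOn ⟨hw, (indepSum_pos_of_nonneg G .univ le_rfl).le⟩
  refine ⟨x, ⟨hx.1, hx.2.lt_of_ne fun h ↦ ?_⟩, (eval_indepPoly G x).trans hx0⟩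
  exact (indepSum_pos_of_nonneg G .univ h.ge).ne' hx0

theorem exists_root_mem_Ico_neg_one_zero [Nonempty V] (G : SimpleGraph V) :
    ∃ x ∈ Ico (-1) 0, (indepPoly G).eval x = 0 := by
  classical
  by_contra! hne
  have hpos : ∀ x ∈ Icc (-1 : ℝ) 0, 0 < indepSum G .univ x := fun x hx ↦ by
    by_contra! h
    obtain ⟨y, hy, hy0⟩ := exists_root_mem_Ico_of_nonpos h
    exact hne y ⟨hx.1.trans hy.1, hy.2⟩ hy0
  obtain ⟨v⟩ := ‹Nonempty V›
  have hv := indepSum_pos_of_subset hpos (Finset.subset_univ (insert v ∅)) (-1) (by simp)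
  rw [indepSum_insert (Finset.notMem_empty v)] at hv
  simp at hv

theorem isGreatest_xi [Nonempty V] (G : SimpleGraph V) :
    IsGreatest {x : ℝ | (indepPoly G).eval x = 0} (xi G) := by
  have hbdd : BddAbove {x : ℝ | (indepPoly G).eval x = 0} := ⟨0, fun x hx ↦ by
    by_contra! h
    exact (indepSum_pos_of_nonneg G .univ h.le).ne' ((eval_indepPoly G x).symm.trans hx)⟩
  obtain ⟨x, -, hx⟩ := exists_root_mem_Ico_neg_one_zero G
  have hclosed : IsClosed {x : ℝ | (indepPoly G).eval x = 0} :=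
    isClosed_eq (indepPoly G).continuous continuous_const
  exact ⟨hclosed.csSup_mem ⟨x, hx⟩ hbdd, fun y hy ↦ le_csSup hbdd hy⟩

theorem indepSum_univ_pos_of_xi_lt [Nonempty V] {x : ℝ} (hx : xi G < x) :
    0 < indepSum G .univ x := by
  by_contra! h
  obtain ⟨y, hy, hy0⟩ := exists_root_mem_Ico_of_nonpos h
  exact (hx.trans_le hy.1).not_ge ((isGreatest_xi G).2 hy0)

theorem xi_le_xi_of_pos_imp_pos [Nonempty V] [Nonempty W]
    (h : ∀ z ∈ Ioc (-1 : ℝ) 0, (∀ x ∈ Icc z 0, 0 < indepSum G .univ x) →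
      0 < indepSum H .univ z) :
    xi H ≤ xi G := by
  by_contra! hlt
  obtain ⟨x, hx, hx0⟩ := exists_root_mem_Ico_neg_one_zero G
  have hroot : indepSum H .univ (xi H) = 0 := by
    rw [← eval_indepPoly]
    exact (isGreatest_xi H).1
  refine (h (xi H) ⟨(hx.1.trans ((isGreatest_xi G).2 hx0)).trans_lt hlt, ?_⟩ fun y hy ↦
    indepSum_univ_pos_of_xi_lt (hlt.trans_le hy.1)).ne' hroot
  by_contra! hpos
  exact (indepSum_pos_of_nonneg H .univ hpos.le).ne' hroot

/-- `l ↦ -l / (1 + l)` is a bijection from `[0, ∞)` onto `(-1, 0]`, inverse to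
`x ↦ -x / (1 + x)`. -/
theorem xi_le_xi_of_pos_imp_pos_subst [Nonempty V] [Nonempty W]
    (h : ∀ L : ℝ, 0 ≤ L → (∀ l ∈ Icc 0 L, 0 < indepSum G .univ (-l / (1 + l))) →
      0 < indepSum H .univ (-L / (1 + L))) :
    xi H ≤ xi G := by
  refine xi_le_xi_of_pos_imp_pos fun z hz hpos ↦ ?_
  have hz1 : 0 < 1 + z := by linarith [hz.1]
  have hsubst : -(-z / (1 + z)) / (1 + -z / (1 + z)) = z := by field_simp; ring
  rw [← hsubst]
  refine h _ (div_nonneg (neg_nonneg.2 hz.2) hz1.le) fun l hl ↦ hpos _ ⟨?_, ?_⟩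
  · rw [mem_Icc, le_div_iff₀ hz1] at hl
    rw [le_div_iff₀ (by linarith)]
    linarith
  · exact div_nonpos_of_nonpos_of_nonneg (neg_nonpos.2 hl.1) (by linarith [hl.1])

theorem indepPoly_congr (e : G ≃g H) : indepPoly G = indepPoly H := by
  refine Polynomial.funext fun x ↦ ?_
  rw [eval_indepPoly, eval_indepPoly, ← indepSum_map e.toEmbedding]
  congr 1
  exact Finset.map_univ_equiv e.toEquiv

theorem xi_congr (e : G ≃g H) : xi G = xi H := by
  rw [xi, xi, indepPoly_congr e]

end LargestRoot

section RootedTree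

variable {V : Type*} [DecidableEq V] {G : SimpleGraph V} {T : Finset V} {r u w : V} {l : ℝ}

/-- `RootedTreeOn G T r` says that `T` induces a tree in `G`, rooted at `r`. Trees are built by
joining two rooted trees by an edge between their roots; the join keeps the first root. -/
inductive RootedTreeOn (G : SimpleGraph V) : Finset V → V → Prop
  | single (r : V) : RootedTreeOn G {r} r
  | join {A B : Finset V} {r r' : V} (hA : RootedTreeOn G A r) (hB : RootedTreeOn G B r')
      (hdisj : Disjoint A B) (hadj : G.Adj r r')
      (honly : ∀ a ∈ A, ∀ b ∈ B, G.Adj a b → a = r ∧ b = r') : RootedTreeOn G (A ∪ B) r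

namespace RootedTreeOn

theorem root_mem (h : RootedTreeOn G T r) : r ∈ T := by
  induction h with
  | single r => exact Finset.mem_singleton_self r
  | join _ _ _ _ _ ihA _ => exact Finset.mem_union_left _ ihA

theorem card_pos (h : RootedTreeOn G T r) : 0 < T.card :=
  Finset.card_pos.2 ⟨r, h.root_mem⟩

theorem insert_leaf (h : RootedTreeOn G T r) (hw : w ∈ T) (hu : u ∉ T) (hwu : G.Adj w u)
    (honly : ∀ a ∈ T, G.Adj a u → a = w) : RootedTreeOn G (insert u T) r := by
  induction h with
  | single r =>
    obtain rfl := Finset.mem_singleton.1 hw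
    rw [Finset.insert_eq, Finset.union_comm]
    exact join (single w) (single u) (by simpa using hwu.ne) hwu (by grind)
  | @join A B r r' hA hB hdisj hadj hAB ihA ihB =>
    rcases Finset.mem_union.1 hw with hwA | hwB
    · rw [← Finset.insert_union]
      exact join (ihA hwA (by grind) (by grind)) hB (by grind [Finset.disjoint_left]) hadj
        (by grind [Finset.disjoint_left, G.adj_comm])
    · rw [← Finset.union_insert]
      exact join hA (ihB hwB (by grind) (by grind)) (by grind [Finset.disjoint_left])
        hadj (by grind [Finset.disjoint_left, G.adj_comm])

theorem exists_subtree_card_add_one (h : RootedTreeOn G T r) (hcard : 1 < T.card) :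
    ∃ T' ⊆ T, RootedTreeOn G T' r ∧ T'.card + 1 = T.card := by
  induction h with
  | single r => simp at hcard
  | @join A B r r' hA hB hdisj hadj hAB _ ihB =>
    rw [Finset.card_union_of_disjoint hdisj]
    obtain hB1 | hB1 := hB.card_pos.nat_succ_le.eq_or_lt
    · exact ⟨A, Finset.subset_union_left, hA, by omega⟩
    · obtain ⟨B', hB'B, hB', hB'card⟩ := ihB hB1
      have hdisj' := hdisj.mono_right hB'B
      refine ⟨A ∪ B', Finset.union_subset_union_right hB'B,
        join hA hB' hdisj' hadj fun a ha b hb ↦ hAB a ha b (hB'B hb), ?_⟩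
      rw [Finset.card_union_of_disjoint hdisj', add_assoc, hB'card]

end RootedTreeOn

open Classical in
/-- The independence polynomial of the subgraph induced on `T` with the closed neighbourhood of `r`
removed. -/
noncomputable def indepSumAway (G : SimpleGraph V) (T : Finset V) (r : V) (x : ℝ) : ℝ :=
  indepSum G {u ∈ T.erase r | ¬ G.Adj r u} x

theorem indepSum_eq_erase_sub (hr : r ∈ T) (l : ℝ) :
    indepSum G T (-l) = indepSum G (T.erase r) (-l) - l * indepSumAway G T r (-l) := by
  rw [indepSum_eq_erase_add hr, indepSumAway, neg_mul, sub_eq_add_neg]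

@[simp]
theorem indepSum_erase_singleton (r : V) (x : ℝ) : indepSum G (({r} : Finset V).erase r) x = 1 := by
  simp

@[simp]
theorem indepSumAway_singleton (r : V) (x : ℝ) : indepSumAway G {r} r x = 1 := by
  simp [indepSumAway]

theorem indepSum_erase_join {A B : Finset V} {r' : V} (hr : r ∈ A) (hdisj : Disjoint A B)
    (honly : ∀ a ∈ A, ∀ b ∈ B, G.Adj a b → a = r ∧ b = r') (x : ℝ) :
    indepSum G ((A ∪ B).erase r) x = indepSum G (A.erase r) x * indepSum G B x := by
  have hrB : r ∉ B := Finset.disjoint_left.1 hdisj hr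
  rw [Finset.erase_union_distrib, Finset.erase_eq_of_notMem hrB,
    indepSum_union (hdisj.mono_left (Finset.erase_subset _ _)) (by grind)]

theorem indepSumAway_join {A B : Finset V} {r' : V} (hr : r ∈ A) (hdisj : Disjoint A B)
    (hadj : G.Adj r r') (honly : ∀ a ∈ A, ∀ b ∈ B, G.Adj a b → a = r ∧ b = r') (x : ℝ) :
    indepSumAway G (A ∪ B) r x = indepSumAway G A r x * indepSum G (B.erase r') x := by
  classical
  have hset : {u ∈ (A ∪ B).erase r | ¬ G.Adj r u} = {u ∈ A.erase r | ¬ G.Adj r u} ∪ B.erase r' := by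
    have := Finset.disjoint_left.1 hdisj hr
    grind
  rw [indepSumAway, hset, indepSum_union _ (by grind), indepSumAway]
  exact hdisj.mono (by grind) (by grind)

/-- The independence polynomial of the path on `k` vertices takes the value `pathEval l (k + 2)`
at `-l`. The index is shifted so that the recursion starts with the values `0` and `1`. -/
def pathEval (l : ℝ) : ℕ → ℝ
  | 0 => 0
  | 1 => 1
  | k + 2 => pathEval l (k + 1) - l * pathEval l k

theorem pathEval_add_two (l : ℝ) (k : ℕ) :
    pathEval l (k + 2) = pathEval l (k + 1) - l * pathEval l k := rfl

theorem pathEval_add_add_one (l : ℝ) (p q : ℕ) :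
    pathEval l (p + q + 1) =
      pathEval l (p + 1) * pathEval l (q + 1) - l * (pathEval l p * pathEval l q) := by
  induction p using Nat.twoStepInduction with
  | zero => simp [pathEval]
  | one => simp [pathEval, add_comm 1 q]
  | more p ih₁ ih₂ =>
    have hrec := pathEval_add_two l (p + q + 1)
    rw [show p + q + 1 + 1 = p + 1 + q + 1 by ring, ih₁, ih₂] at hrec
    rw [show p + 2 + q + 1 = p + q + 1 + 2 by ring, hrec, pathEval_add_two l (p + 1),
      pathEval_add_two l p]
    ring

theorem pathEval_mul_sub_mul (l : ℝ) (p q : ℕ) :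
    pathEval l (p + 1) * pathEval l (q + 1) * pathEval l (p + 1 + q + 1)
      - pathEval l (p + 1 + q) * pathEval l (p + 2) * pathEval l (q + 2) =
      l * (pathEval l p * pathEval l q * pathEval l (p + 1 + q + 2)) := by
  have h₀ := pathEval_add_add_one l p q
  have h₁ := pathEval_add_add_one l (p + 1) q
  have h₂ := pathEval_add_add_one l (p + 1) (q + 1)
  rw [show p + 1 + (q + 1) + 1 = p + 1 + q + 2 by ring] at h₂
  rw [show p + 1 + q = p + q + 1 by ring] at *
  simp only [h₀, h₁, h₂, pathEval_add_two l p, pathEval_add_two l q]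
  ring

/-- The case of two paths on `p` and `q` vertices, which bounds the general one. -/
theorem pathEval_pos_of_join {p q : ℕ} {a b a' b' : ℝ} (hl : 0 ≤ l) (ha : 0 < a) (ha' : 0 < a')
    (hp : 0 < pathEval l (p + 1)) (hq : 0 < pathEval l (q + 1))
    (hab : a * pathEval l p ≤ b * pathEval l (p + 1))
    (hab' : a' * pathEval l q ≤ b' * pathEval l (q + 1))
    (hpos : 0 < a * (a' - l * b') - l * (b * a')) : 0 < pathEval l (p + q + 2) := by
  have hsplit := pathEval_add_add_one l p (q + 1)
  rw [pathEval_add_two] at hsplit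
  have h₁ := mul_le_mul_of_nonneg_left hab (by positivity : 0 ≤ l * (a' * pathEval l (q + 1)))
  have h₂ := mul_le_mul_of_nonneg_left hab' (by positivity : 0 ≤ l * (a * pathEval l (p + 1)))
  have h₃ : 0 < (a * (a' - l * b') - l * (b * a')) * (pathEval l (p + 1) * pathEval l (q + 1)) :=
    by positivity
  refine pos_of_mul_pos_right (a := a * a') ?_ (by positivity)
  rw [show p + q + 2 = p + (q + 1) + 1 by ring, hsplit]
  linarith

theorem mul_pathEval_le_of_join {p q : ℕ} {a b a' b' : ℝ} (hl : 0 ≤ l) (ha : 0 < a) (ha' : 0 < a')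
    (hpos : ∀ k ≤ p + 1 + q + 2, 0 ≤ pathEval l k) (hp : 0 < pathEval l (p + 2))
    (hq : 0 < pathEval l (q + 1)) (hab : a * pathEval l (p + 1) ≤ b * pathEval l (p + 2))
    (hab' : a' * pathEval l q ≤ b' * pathEval l (q + 1)) :
    a * (a' - l * b') * pathEval l (p + 1 + q) ≤ b * a' * pathEval l (p + 1 + q + 1) := by
  have hkey : 0 ≤ l * (pathEval l p * pathEval l q * pathEval l (p + 1 + q + 2)) :=
    mul_nonneg hl (mul_nonneg (mul_nonneg (hpos _ (by omega)) (hpos _ (by omega)))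
      (hpos _ le_rfl))
  rw [← pathEval_mul_sub_mul] at hkey
  have hm := hpos (p + 1 + q) (by omega)
  have hm' := hpos (p + 1 + q + 1) (by omega)
  refine le_of_mul_le_mul_right ?_ (mul_pos hp hq)
  calc a * (a' - l * b') * pathEval l (p + 1 + q) * (pathEval l (p + 2) * pathEval l (q + 1))
      = a * pathEval l (p + 1 + q) * pathEval l (p + 2) *
          (a' * pathEval l (q + 1) - l * (b' * pathEval l (q + 1))) := by ring
    _ ≤ a * pathEval l (p + 1 + q) * pathEval l (p + 2) *
          (a' * pathEval l (q + 1) - l * (a' * pathEval l q)) := by gcongr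
    _ = a * a' * (pathEval l (p + 1 + q) * pathEval l (p + 2) * pathEval l (q + 2)) := by
        rw [pathEval_add_two l q]
        ring
    _ ≤ a * a' * (pathEval l (p + 1) * pathEval l (q + 1) * pathEval l (p + 1 + q + 1)) := by
        exact mul_le_mul_of_nonneg_left (sub_nonneg.1 hkey) (by positivity)
    _ = a * pathEval l (p + 1) * (a' * pathEval l (q + 1) * pathEval l (p + 1 + q + 1)) := by ring
    _ ≤ b * pathEval l (p + 2) * (a' * pathEval l (q + 1) * pathEval l (p + 1 + q + 1)) := by
        gcongr
    _ = _ := by ring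

namespace RootedTreeOn

theorem pathEval_bounds_join {A B : Finset V} {r' : V} (hA : RootedTreeOn G A r)
    (hB : RootedTreeOn G B r') (hdisj : Disjoint A B) (hadj : G.Adj r r')
    (honly : ∀ a ∈ A, ∀ b ∈ B, G.Adj a b → a = r ∧ b = r') (hl : 0 ≤ l)
    (hpos : ∀ S ⊆ A ∪ B, 0 < indepSum G S (-l))
    (hpath : ∀ k ≤ (A ∪ B).card, 0 < pathEval l (k + 1))
    (hratioA : indepSum G (A.erase r) (-l) * pathEval l A.card ≤
      indepSumAway G A r (-l) * pathEval l (A.card + 1))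
    (hratioB : indepSum G (B.erase r') (-l) * pathEval l B.card ≤
      indepSumAway G B r' (-l) * pathEval l (B.card + 1)) :
    0 < pathEval l ((A ∪ B).card + 2) ∧
      indepSum G ((A ∪ B).erase r) (-l) * pathEval l (A ∪ B).card ≤
        indepSumAway G (A ∪ B) r (-l) * pathEval l ((A ∪ B).card + 1) := by
  have ha := hpos (A.erase r) (by grind)
  have ha' := hpos (B.erase r') (by grind)
  have hroot := hpos (A ∪ B) subset_rfl
  rw [indepSum_eq_erase_sub (Finset.mem_union_left B hA.root_mem)] at hroot
  rw [indepSumAway_join hA.root_mem hdisj hadj honly,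
    indepSum_erase_join hA.root_mem hdisj honly, indepSum_eq_erase_sub hB.root_mem] at hroot ⊢
  obtain ⟨p, hp⟩ := Nat.exists_eq_add_one.2 hA.card_pos
  rw [hp] at hratioA
  rw [Finset.card_union_of_disjoint hdisj, hp] at hpath ⊢
  have hpA := hpath (p + 1) (by omega)
  have hpB := hpath B.card (by omega)
  have htop := pathEval_pos_of_join hl ha ha' hpA hpB hratioA hratioB hroot
  refine ⟨htop, mul_pathEval_le_of_join hl ha ha' (fun k hk ↦ ?_) hpA hpB hratioA hratioB⟩
  rcases k with _ | k
  · exact le_rfl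
  · obtain hk | hk : k ≤ p + 1 + B.card ∨ k = p + 1 + B.card + 1 := by omega
    · exact (hpath k hk).le
    · exact hk ▸ htop.le

/-- Among the rooted trees of a given order, the path rooted at an end has the smallest ratio of
`I(T - N[r])` to `I(T - r)`. -/
theorem pathEval_bounds (h : RootedTreeOn G T r) (hl : 0 ≤ l)
    (hpos : ∀ S ⊆ T, 0 < indepSum G S (-l)) :
    (∀ k ≤ T.card + 1, 0 < pathEval l (k + 1)) ∧
      indepSum G (T.erase r) (-l) * pathEval l T.card ≤
        indepSumAway G T r (-l) * pathEval l (T.card + 1) := by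
  induction hn : T.card using Nat.strong_induction_on generalizing T r with | h n ih =>
  subst hn
  cases h with
  | single r =>
    have hr := hpos {r} subset_rfl
    rw [indepSum_eq_erase_sub (Finset.mem_singleton_self r), indepSum_erase_singleton,
      indepSumAway_singleton] at hr
    refine ⟨fun k hk ↦ ?_, by simp [pathEval]⟩
    rw [Finset.card_singleton] at hk
    interval_cases k <;> (simp [pathEval]; try linarith)
  | @join A B r r' hA hB hdisj hadj honly =>
    have hcard := Finset.card_union_of_disjoint hdisj
    have hA0 := hA.card_pos
    have hB0 := hB.card_pos
    obtain ⟨T', hT', hT'r, hT'card⟩ :=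
      (join hA hB hdisj hadj honly).exists_subtree_card_add_one (by omega)
    obtain ⟨-, hratioA⟩ :=
      ih _ (by omega) hA (fun S hS ↦ hpos S (hS.trans Finset.subset_union_left)) rfl
    obtain ⟨-, hratioB⟩ :=
      ih _ (by omega) hB (fun S hS ↦ hpos S (hS.trans Finset.subset_union_right)) rfl
    obtain ⟨hpath, -⟩ := ih _ (by omega) hT'r (fun S hS ↦ hpos S (hS.trans hT')) rfl
    rw [hT'card] at hpath
    obtain ⟨htop, hratio⟩ :=
      pathEval_bounds_join hA hB hdisj hadj honly hl hpos hpath hratioA hratioB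
    refine ⟨fun k hk ↦ ?_, hratio⟩
    obtain hk | rfl := hk.lt_or_eq
    · exact hpath k (Nat.le_of_lt_succ hk)
    · exact htop

/-- Among the rooted trees of a given order, the star rooted at its centre has the largest ratio of
`I(T - N[r])` to `I(T - r)`. -/
theorem star_bounds (h : RootedTreeOn G T r) (hl : 0 ≤ l) (hl1 : l < 1)
    (hT : l < (1 - l) ^ (T.card - 1)) :
    0 < indepSumAway G T r (-l) ∧
      (1 - l) ^ (T.card - 1) * indepSumAway G T r (-l) ≤ indepSum G (T.erase r) (-l) := by
  induction h with
  | single r => simp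
  | @join A B r r' hA hB hdisj hadj honly ihA ihB =>
    have hA0 := hA.card_pos
    have hB0 := hB.card_pos
    have hl1' : 0 < 1 - l := sub_pos.2 hl1
    have hcard : (A ∪ B).card - 1 = A.card - 1 + (B.card - 1 + 1) := by
      rw [Finset.card_union_of_disjoint hdisj]
      omega
    have hpow : ∀ k ≤ (A ∪ B).card - 1, l < (1 - l) ^ k := fun k hk ↦
      hT.trans_le (pow_le_pow_of_le_one hl1'.le (by linarith) hk)
    obtain ⟨hb, hab⟩ := ihA (hpow _ (by omega))
    obtain ⟨hb', hab'⟩ := ihB (hpow _ (by omega))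
    have hu1 := pow_le_one₀ (n := B.card - 1) hl1'.le (by linarith)
    have hul := hpow (B.card - 1 + 1) (by omega)
    rw [indepSumAway_join hA.root_mem hdisj hadj honly, hcard,
      indepSum_erase_join hA.root_mem hdisj honly, indepSum_eq_erase_sub hB.root_mem, pow_add]
    set u := (1 - l) ^ (B.card - 1)
    rw [pow_succ] at hul ⊢
    have hu0 : 0 < u := pow_pos hl1' _
    have ha' : 0 < indepSum G (B.erase r') (-l) := (mul_pos hu0 hb').trans_le hab'
    have hstar : u * (1 - l) * indepSum G (B.erase r') (-l) ≤
        indepSum G (B.erase r') (-l) - l * indepSumAway G B r' (-l) := by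
      have hfactor : 0 ≤ (1 - u) * (u * (1 - l) - l) :=
        mul_nonneg (sub_nonneg.2 hu1) (sub_nonneg.2 hul.le)
      refine le_of_mul_le_mul_left ?_ hu0
      nlinarith [mul_le_mul_of_nonneg_left hab' hl, mul_nonneg hfactor ha'.le]
    refine ⟨mul_pos hb ha', ?_⟩
    calc _ = (1 - l) ^ (A.card - 1) * indepSumAway G A r (-l) *
          (u * (1 - l) * indepSum G (B.erase r') (-l)) := by ring
      _ ≤ _ := mul_le_mul hab hstar (by positivity) ((by positivity : (0 : ℝ) ≤ _).trans hab)

theorem pathEval_card_pos (h : RootedTreeOn G T r) (hl : 0 ≤ l)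
    (hpos : ∀ x ∈ Set.Icc (-l) 0, 0 < indepSum G T x) : 0 < pathEval l (T.card + 2) :=
  (h.pathEval_bounds hl fun _ hS ↦ indepSum_pos_of_subset hpos hS _
    ⟨le_rfl, neg_nonpos.2 hl⟩).1 _ le_rfl

theorem indepSum_pos_of_lt_pow (h : RootedTreeOn G T r) (hl : 0 ≤ l) (hl1 : l < 1)
    (hT : l < (1 - l) ^ (T.card - 1)) : 0 < indepSum G T (-l) := by
  obtain ⟨hb, hab⟩ := h.star_bounds hl hl1 hT
  rw [indepSum_eq_erase_sub h.root_mem, sub_pos]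
  exact (mul_lt_mul_of_pos_right hT hb).trans_le hab

end RootedTreeOn

end RootedTree

section TreeRep

variable {V : Type*} [DecidableEq V] {G : SimpleGraph V} {S U U' : Finset V} {u v w : V} {l : ℝ}

/-- The vertices `u` and `v` outside `S` form a pendant pair: a path `w - u - v` attached to the
subgraph induced on `S` at its vertex `w`, so that `v` is a leaf and `u` has degree two. -/
structure IsPendantPair (G : SimpleGraph V) (S : Finset V) (w u v : V) : Prop where
  mem_base : w ∈ S
  stem_notMem : u ∉ S
  leaf_notMem : v ∉ S
  adj_leaf : G.Adj u v
  adj_base : G.Adj u w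
  eq_base_of_adj : ∀ z ∈ S, G.Adj u z → z = w
  leaf_not_adj : ∀ z ∈ S, ¬ G.Adj v z

/-- `TreeRep G S U U'` says that the independence polynomial of the graph induced on `S` is obtained
from that of a tree `U ⊆ S` of order `m` by `x ↦ x / (1 + x)` and multiplication by
`(1 + x) ^ (m - 1)`, and that this persists when vertices of `U' ⊆ U` are deleted. The argument is
written as `x = -l / (1 + l)`, so that `x / (1 + x) = -l` and `1 + x = (1 + l)⁻¹`. -/
structure TreeRep (G : SimpleGraph V) (S U U' : Finset V) : Prop where
  exists_root : ∃ r, RootedTreeOn G U r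
  subset : U ⊆ S
  deletable_subset : U' ⊆ U
  eval_sdiff : ∀ l : ℝ, 0 ≤ l → ∀ D ⊆ U',
    (1 + l) ^ U.card * indepSum G (S \ D) (-l / (1 + l)) = (1 + l) * indepSum G (U \ D) (-l)

namespace TreeRep

theorem insert_pendantPair (h : TreeRep G S U U') (hp : IsPendantPair G S w u v) (hw : w ∈ U') :
    TreeRep G (insert u (insert v S)) (insert u U) (insert u U') where
  exists_root := by
    obtain ⟨r, hr⟩ := h.exists_root
    exact ⟨r, hr.insert_leaf (h.deletable_subset hw) (fun huU ↦ hp.stem_notMem (h.subset huU))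
      hp.adj_base.symm fun a ha hau ↦ hp.eq_base_of_adj a (h.subset ha) hau.symm⟩
  subset := Finset.insert_subset_insert u (h.subset.trans (Finset.subset_insert v S))
  deletable_subset := Finset.insert_subset_insert u h.deletable_subset
  eval_sdiff l hl D hD := by
    classical
    obtain ⟨-, hu, hv, huv, huw, huS, hvS⟩ := hp
    have hUS := h.subset
    have hU'U := h.deletable_subset
    have hl1 : 1 + l ≠ 0 := by positivity
    have huv' := huv.ne
    rw [Finset.card_insert_of_notMem fun huU ↦ hu (hUS huU)]
    by_cases huD : u ∈ D
    · have hS : insert u (insert v S) \ D = insert v (S \ D.erase u) := by grind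
      have hU : insert u U \ D = U \ D.erase u := by grind
      rw [hS, hU, ← h.eval_sdiff l hl (D.erase u) (by grind),
        indepSum_insert_of_forall_not_adj (by grind) (by grind)]
      field_simp
      ring
    · have hDU' : D ⊆ U' := by grind
      have hS : insert u (insert v S) \ D = insert u (insert v (S \ D)) := by grind
      have hU : insert u U \ D = insert u (U \ D) := by grind
      have hSw : {z ∈ S \ D | ¬ G.Adj u z} = S \ insert w D := by grind
      have hUw : {z ∈ U \ D | ¬ G.Adj u z} = U \ insert w D := by grind
      have hD₀ := h.eval_sdiff l hl D hDU'
      have hD₁ := h.eval_sdiff l hl (insert w D) (Finset.insert_subset hw hDU')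
      rw [hS, hU, indepSum_insert_insert_of_pendant (by grind) (by grind) huv (by grind),
        indepSum_insert (by grind), hSw, hUw, mul_add, mul_add, ← mul_left_comm (-l), ← hD₀, ← hD₁]
      field_simp
      ring

theorem eval_eq (h : TreeRep G S U U') (hl : 0 ≤ l) :
    (1 + l) ^ U.card * indepSum G S (-l / (1 + l)) = (1 + l) * indepSum G U (-l) := by
  simpa only [Finset.sdiff_empty] using h.eval_sdiff l hl ∅ (Finset.empty_subset U')

theorem indepSum_pos_iff (h : TreeRep G S U U') (hl : 0 ≤ l) :
    0 < indepSum G S (-l / (1 + l)) ↔ 0 < indepSum G U (-l) := by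
  have hl1 : 0 < 1 + l := by positivity
  rw [← mul_pos_iff_of_pos_left (pow_pos hl1 U.card), h.eval_eq hl, mul_pos_iff_of_pos_left hl1]

theorem pathEval_pos (h : TreeRep G S U U') (hl : 0 ≤ l)
    (hpos : ∀ t ∈ Set.Icc 0 l, 0 < indepSum G S (-t / (1 + t))) :
    0 < pathEval l (U.card + 2) := by
  obtain ⟨r, hr⟩ := h.exists_root
  refine hr.pathEval_card_pos hl fun x hx ↦ ?_
  have hx' : -x ∈ Set.Icc 0 l := ⟨neg_nonneg.2 hx.2, neg_le.1 hx.1⟩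
  simpa only [neg_neg] using (h.indepSum_pos_iff hx'.1).1 (hpos (-x) hx')

theorem indepSum_pos_of_lt_pow (h : TreeRep G S U U') (hl : 0 ≤ l) (hl1 : l < 1)
    (hU : l < (1 - l) ^ (U.card - 1)) : 0 < indepSum G S (-l / (1 + l)) := by
  obtain ⟨r, hr⟩ := h.exists_root
  exact (h.indepSum_pos_iff hl).2 (hr.indepSum_pos_of_lt_pow hl hl1 hU)

end TreeRep

end TreeRep

section WellCoveredOn

variable {V : Type*} {G : SimpleGraph V} {S M X R N : Finset V} {a b c u v v' w : V}

/-- `s` is a maximal independent set of the subgraph induced on `S`. -/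
def IsMaxIndepOn (G : SimpleGraph V) (S s : Finset V) : Prop :=
  s ⊆ S ∧ IsIndepFinset G s ∧ ∀ v ∈ S, v ∉ s → ∃ u ∈ s, G.Adj v u

/-- The subgraph induced on `S` is well-covered. -/
def WellCoveredOn (G : SimpleGraph V) (S : Finset V) : Prop :=
  ∀ s t, IsMaxIndepOn G S s → IsMaxIndepOn G S t → s.card = t.card

open Classical in
/-- The neighbours of `v` in `S`. -/
noncomputable def nbrIn (G : SimpleGraph V) (S : Finset V) (v : V) : Finset V :=
  {u ∈ S | G.Adj v u}

theorem mem_nbrIn : u ∈ nbrIn G S v ↔ u ∈ S ∧ G.Adj v u := by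
  simp only [nbrIn, Finset.mem_filter]

theorem exists_isMaxIndepOn_superset (hX : X ⊆ S) (hi : IsIndepFinset G X) :
    ∃ M, X ⊆ M ∧ IsMaxIndepOn G S M := by
  classical
  obtain ⟨M, hXM, hM⟩ := {t ∈ S.powerset | IsIndepFinset G t}.exists_le_maximal
    (Finset.mem_filter.2 ⟨Finset.mem_powerset.2 hX, hi⟩)
  have hMprop := hM.prop
  rw [Finset.mem_filter, Finset.mem_powerset] at hMprop
  refine ⟨M, hXM, hMprop.1, hMprop.2, fun v hv hvM ↦ ?_⟩
  by_contra! hcon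
  have hvM' : insert v M ∈ {t ∈ S.powerset | IsIndepFinset G t} := by
    rw [Finset.mem_filter, Finset.mem_powerset]
    exact ⟨Finset.insert_subset hv hMprop.1, isIndepFinset_insert_iff.2 ⟨hMprop.2, hcon⟩⟩
  exact hvM (hM.le_of_ge hvM' (Finset.subset_insert v M) (Finset.mem_insert_self v M))

namespace WellCoveredOn

theorem card_le_card (h : WellCoveredOn G S) (hM : IsMaxIndepOn G S M) (hX : X ⊆ S)
    (hi : IsIndepFinset G X) : X.card ≤ M.card := by
  obtain ⟨M', hXM', hM'⟩ := exists_isMaxIndepOn_superset hX hi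
  exact (Finset.card_le_card hXM').trans (h M' M hM' hM).le

theorem card_le_card_of_exchange (h : WellCoveredOn G S) (hX : X ⊆ S) (hXi : IsIndepFinset G X)
    (hR : R ⊆ X) (hN : N ⊆ S) (hNi : IsIndepFinset G N) (hNX : ∀ n ∈ N, ∃ x ∈ X, G.Adj n x)
    (hNR : ∀ n ∈ N, ∀ z ∈ S, G.Adj n z → z ∈ R ∨ ∃ x ∈ X, G.Adj z x) : N.card ≤ R.card := by
  classical
  obtain ⟨M, hXM, hM⟩ := exists_isMaxIndepOn_superset hX hXi
  have hdisj : Disjoint (M \ R) N := by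
    refine Finset.disjoint_right.2 fun n hn hnM ↦ ?_
    obtain ⟨x, hx, hnx⟩ := hNX n hn
    exact hM.2.1 n (Finset.sdiff_subset hnM) x (hXM hx) hnx
  have hcross : ∀ m ∈ M \ R, ∀ n ∈ N, ¬ G.Adj n m := by
    intro m hm n hn hnm
    obtain ⟨hmM, hmR⟩ := Finset.mem_sdiff.1 hm
    obtain ⟨x, hx, hmx⟩ := (hNR n hn m (hM.1 hmM) hnm).resolve_left hmR
    exact hM.2.1 m hmM x (hXM hx) hmx
  have hunion : IsIndepFinset G (M \ R ∪ N) := by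
    have hMi := hM.2.1
    grind [IsIndepFinset, G.adj_comm]
  have hle := h.card_le_card hM (Finset.union_subset (Finset.sdiff_subset.trans hM.1) hN) hunion
  rw [Finset.card_union_of_disjoint hdisj, Finset.card_sdiff_of_subset (hR.trans hXM)] at hle
  have := Finset.card_le_card (hR.trans hXM)
  omega

theorem eq_of_nbrIn_eq_singleton (h : WellCoveredOn G S) (hv : v ∈ S) (hv' : v' ∈ S)
    (hvu : nbrIn G S v = {u}) (hvu' : nbrIn G S v' = {u}) : v = v' := by
  classical
  by_contra hne
  have hN : ∀ z, z ∈ S ∧ G.Adj v z ↔ z = u := by simp [← mem_nbrIn, hvu]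
  have hN' : ∀ z, z ∈ S ∧ G.Adj v' z ↔ z = u := by simp [← mem_nbrIn, hvu']
  have := h.card_le_card_of_exchange (X := {u}) (R := {u}) (N := {v, v'})
    (by grind) (by grind [IsIndepFinset, G.irrefl]) subset_rfl (by grind)
    (by grind [IsIndepFinset, G.adj_comm, G.irrefl]) (by grind [(hN u).2 rfl, (hN' u).2 rfl])
    (by grind)
  rw [Finset.card_pair hne, Finset.card_singleton] at this
  omega

end WellCoveredOn

end WellCoveredOn

section Regular

variable {V : Type*} {G : SimpleGraph V} {S X : Finset V} {a b c d s u v w : V}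

/-- The subgraph induced on `S` is a connected well-covered unicyclic graph of odd order.
Connectedness says that no proper nonempty subset of `S` is closed under adjacency, and having as
many edges as vertices is expressed through the sum of the degrees. -/
structure OddWellCoveredUnicyclicOn (G : SimpleGraph V) (S : Finset V) : Prop where
  odd_card : Odd S.card
  eq_of_closed : ∀ X ⊆ S, X.Nonempty → (∀ a ∈ X, ∀ b ∈ S, G.Adj a b → b ∈ X) → X = S
  sum_card_nbrIn : ∑ v ∈ S, (nbrIn G S v).card = 2 * S.card
  wellCovered : WellCoveredOn G S

open Classical in
/-- The vertices of degree one of the subgraph induced on `S`. -/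
noncomputable def leavesIn (G : SimpleGraph V) (S : Finset V) : Finset V :=
  {v ∈ S | (nbrIn G S v).card = 1}

open Classical in
/-- The neighbours of the vertices of degree one of the subgraph induced on `S`. -/
noncomputable def stemsIn (G : SimpleGraph V) (S : Finset V) : Finset V :=
  {u ∈ S | ∃ v ∈ S, nbrIn G S v = {u}}

/-- In the subgraph induced on `S` no neighbour of a leaf has degree two, so that there is no
pendant path of order two to remove. -/
def NoStemOfDegreeTwo (G : SimpleGraph V) (S : Finset V) : Prop :=
  ∀ u ∈ stemsIn G S, (nbrIn G S u).card ≠ 2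

theorem mem_leavesIn : v ∈ leavesIn G S ↔ v ∈ S ∧ ∃ u, nbrIn G S v = {u} := by
  simp only [leavesIn, Finset.mem_filter, Finset.card_eq_one]

theorem mem_stemsIn : u ∈ stemsIn G S ↔ u ∈ S ∧ ∃ v ∈ S, nbrIn G S v = {u} := by
  simp only [stemsIn, Finset.mem_filter]

theorem WellCoveredOn.card_leavesIn_le (h : WellCoveredOn G S) :
    (leavesIn G S).card ≤ (stemsIn G S).card := by
  refine Finset.card_le_card_of_forall_subsingleton (fun v u ↦ nbrIn G S v = {u})
    (fun v hv ↦ ?_) fun u _ v hv v' hv' ↦ ?_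
  · obtain ⟨hvS, u, hvu⟩ := mem_leavesIn.1 hv
    have huS : u ∈ S := (mem_nbrIn.1 (hvu ▸ Finset.mem_singleton_self u)).1
    exact ⟨u, mem_stemsIn.2 ⟨huS, v, hvS, hvu⟩, hvu⟩
  · exact h.eq_of_nbrIn_eq_singleton (mem_leavesIn.1 hv.1).1 (mem_leavesIn.1 hv'.1).1 hv.2 hv'.2

theorem exists_nbrIn_eq_pair [DecidableEq V] (hv : (nbrIn G S v).card = 2) (hu : u ∈ S)
    (hvu : G.Adj v u) : ∃ w, w ≠ u ∧ nbrIn G S v = {u, w} := by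
  obtain ⟨p, q, hpq, hNv⟩ := Finset.card_eq_two.1 hv
  have huN : u ∈ nbrIn G S v := mem_nbrIn.2 ⟨hu, hvu⟩
  rw [hNv, Finset.mem_insert, Finset.mem_singleton] at huN
  rcases huN with rfl | rfl
  · exact ⟨q, hpq.symm, hNv⟩
  · exact ⟨p, hpq, hNv.trans (Finset.pair_comm p u)⟩

theorem WellCoveredOn.adj_of_nbrIn_eq_pair [DecidableEq V] (h : WellCoveredOn G S) (hsS : s ∈ S)
    (hbS : b ∈ S) (hs : nbrIn G S s = {a}) (hb : nbrIn G S b = {a, c}) (hca : c ≠ a) (hdS : d ∈ S)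
    (hcd : G.Adj c d) (hdb : d ≠ b) : G.Adj a d := by
  by_contra hnad
  have hNs : ∀ z, z ∈ S ∧ G.Adj s z ↔ z = a := by simp [← mem_nbrIn, hs]
  have hNb : ∀ z, z ∈ S ∧ G.Adj b z ↔ z = a ∨ z = c := by simp [← mem_nbrIn, hb]
  have ha := (hNs a).2 rfl
  have hsb : s ≠ b := by grind [hNs c, hNb c]
  have hle := h.card_le_card_of_exchange (X := {a, d}) (R := {a}) (N := {s, b})
    (by grind) (by grind [IsIndepFinset, G.adj_comm, G.irrefl]) (by grind) (by grind)
    (by grind [IsIndepFinset, G.adj_comm, G.irrefl]) (by grind) (by grind)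
  rw [Finset.card_pair hsb, Finset.card_singleton] at hle
  omega

namespace OddWellCoveredUnicyclicOn

theorem nonempty_nbrIn (h : OddWellCoveredUnicyclicOn G S) (hv : v ∈ S) :
    (nbrIn G S v).Nonempty := by
  by_contra hempty
  rw [Finset.not_nonempty_iff_eq_empty] at hempty
  have hS := h.eq_of_closed {v} (Finset.singleton_subset_iff.2 hv) (Finset.singleton_nonempty v)
    fun a ha b hb hab ↦ by
      rw [Finset.mem_singleton.1 ha] at hab
      exact absurd (mem_nbrIn.2 ⟨hb, hab⟩) (hempty ▸ Finset.notMem_empty b)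
  have hsum := h.sum_card_nbrIn
  rw [← hS, Finset.sum_singleton, hS, hempty] at hsum
  simp [← hS] at hsum

theorem three_le_card_nbrIn (h : OddWellCoveredUnicyclicOn G S) (hno : NoStemOfDegreeTwo G S)
    (hu : u ∈ stemsIn G S) : 3 ≤ (nbrIn G S u).card := by
  classical
  obtain ⟨huS, v, hvS, hvu⟩ := mem_stemsIn.1 hu
  have hN : ∀ z, z ∈ S ∧ G.Adj v z ↔ z = u := by simp [← mem_nbrIn, hvu]
  have hpos := (h.nonempty_nbrIn huS).card_pos
  have htwo := hno u hu
  suffices (nbrIn G S u).card ≠ 1 by omega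
  intro hone
  obtain ⟨v', hv'⟩ := Finset.card_eq_one.1 hone
  have hN' : ∀ z, z ∈ S ∧ G.Adj u z ↔ z = v' := by simp [← mem_nbrIn, hv']
  have hadj : G.Adj v u := ((hN u).2 rfl).2
  have hS := h.eq_of_closed {u, v} (by grind) (by simp) (by grind [G.adj_comm])
  have hodd := h.odd_card
  rw [← hS, Finset.card_pair hadj.ne'] at hodd
  exact absurd hodd (by decide)

theorem card_nbrIn_eq (h : OddWellCoveredUnicyclicOn G S) (hno : NoStemOfDegreeTwo G S) :
    (leavesIn G S).card = (stemsIn G S).card ∧ ∀ v ∈ S, v ∉ leavesIn G S →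
      (v ∈ stemsIn G S ∧ (nbrIn G S v).card = 3) ∨
      (v ∉ stemsIn G S ∧ (nbrIn G S v).card = 2) := by
  classical
  have hle : ∀ v ∈ S, (2 + if v ∈ stemsIn G S then 1 else 0) ≤
      (nbrIn G S v).card + if v ∈ leavesIn G S then 1 else 0 := by
    intro v hv
    have hpos := (h.nonempty_nbrIn hv).card_pos
    have hleaf : v ∈ leavesIn G S ↔ (nbrIn G S v).card = 1 := by simp [leavesIn, hv]
    have hstem := h.three_le_card_nbrIn hno (u := v)
    split_ifs <;> grind
  have hsum := Finset.sum_le_sum hle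
  have hleaves : leavesIn G S ⊆ S := Finset.filter_subset _ S
  have hstems : stemsIn G S ⊆ S := Finset.filter_subset _ S
  have hleft : ∑ v ∈ S, (2 + if v ∈ stemsIn G S then 1 else 0) =
      2 * S.card + (stemsIn G S).card := by
    rw [Finset.sum_add_distrib, Finset.sum_ite_mem, Finset.inter_eq_right.2 hstems]
    simp [mul_comm]
  have hright : ∑ v ∈ S, ((nbrIn G S v).card + if v ∈ leavesIn G S then 1 else 0) =
      2 * S.card + (leavesIn G S).card := by
    rw [Finset.sum_add_distrib, Finset.sum_ite_mem, Finset.inter_eq_right.2 hleaves,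
      h.sum_card_nbrIn]
    simp
  have hcard : (leavesIn G S).card = (stemsIn G S).card :=
    le_antisymm h.wellCovered.card_leavesIn_le (by omega)
  refine ⟨hcard, fun v hv hvL ↦ ?_⟩
  have heq := (Finset.sum_eq_sum_iff_of_le hle).1 (by rw [hleft, hright, hcard]) v hv
  split_ifs at heq with hvA <;> grind

theorem notMem_leavesIn (h : OddWellCoveredUnicyclicOn G S) (hno : NoStemOfDegreeTwo G S)
    (hu : u ∈ stemsIn G S) : u ∉ leavesIn G S := by
  intro huL
  have hone : (nbrIn G S u).card = 1 := (Finset.mem_filter.1 huL).2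
  have := h.three_le_card_nbrIn hno hu
  omega

theorem card_nbrIn_of_mem_stemsIn (h : OddWellCoveredUnicyclicOn G S)
    (hno : NoStemOfDegreeTwo G S) (hu : u ∈ stemsIn G S) : (nbrIn G S u).card = 3 :=
  (((h.card_nbrIn_eq hno).2 u (mem_stemsIn.1 hu).1 (h.notMem_leavesIn hno hu)).resolve_right
    fun hu' ↦ hu'.1 hu).2

theorem card_nbrIn_of_notMem (h : OddWellCoveredUnicyclicOn G S) (hno : NoStemOfDegreeTwo G S)
    (hv : v ∈ S) (hvL : v ∉ leavesIn G S) (hvA : v ∉ stemsIn G S) : (nbrIn G S v).card = 2 :=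
  (((h.card_nbrIn_eq hno).2 v hv hvL).resolve_left fun hv' ↦ hvA hv'.1).2

theorem exists_four_cycle [DecidableEq V] (h : OddWellCoveredUnicyclicOn G S)
    (hno : NoStemOfDegreeTwo G S) (ha : a ∈ stemsIn G S) (hb : b ∈ S) (hbL : b ∉ leavesIn G S)
    (hbA : b ∉ stemsIn G S) (hab : G.Adj a b) :
    ∃ c d, c ≠ a ∧ d ≠ b ∧ nbrIn G S b = {a, c} ∧ nbrIn G S c = {b, d} ∧ G.Adj a d := by
  obtain ⟨haS, s, hsS, hs⟩ := mem_stemsIn.1 ha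
  obtain ⟨c, hca, hNb⟩ := exists_nbrIn_eq_pair (h.card_nbrIn_of_notMem hno hb hbL hbA) haS hab.symm
  have hbc : c ∈ S ∧ G.Adj b c := by simp [← mem_nbrIn, hNb]
  have hkey : ∀ d ∈ S, G.Adj c d → d ≠ b → G.Adj a d := fun d ↦
    h.wellCovered.adj_of_nbrIn_eq_pair hsS hb hs hNb hca
  have hcL : c ∉ leavesIn G S := by
    intro hcL
    obtain ⟨-, u, hcu⟩ := mem_leavesIn.1 hcL
    obtain rfl : b = u := Finset.mem_singleton.1 (hcu ▸ mem_nbrIn.2 ⟨hb, hbc.2.symm⟩)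
    exact hbA (mem_stemsIn.2 ⟨hb, c, hbc.1, hcu⟩)
  have hcA : c ∉ stemsIn G S := by
    intro hcA
    obtain ⟨-, t, htS, ht⟩ := mem_stemsIn.1 hcA
    have htc : G.Adj t c := (mem_nbrIn.1 (ht ▸ Finset.mem_singleton_self c)).2
    have htb : t ≠ b := fun e ↦ hbL (mem_leavesIn.2 ⟨hb, c, e ▸ ht⟩)
    have hta : a ∈ nbrIn G S t := mem_nbrIn.2 ⟨haS, (hkey t htS htc.symm htb).symm⟩
    exact hca (Finset.mem_singleton.1 (ht ▸ hta)).symm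
  obtain ⟨d, hdb, hNc⟩ :=
    exists_nbrIn_eq_pair (h.card_nbrIn_of_notMem hno hbc.1 hcL hcA) hb hbc.2.symm
  have hcd : d ∈ S ∧ G.Adj c d := by simp [← mem_nbrIn, hNc]
  exact ⟨c, d, hca, hdb, hNb, hNc, hkey d hcd.1 hcd.2 hdb⟩

theorem nbrIn_eq_triple [DecidableEq V] (h : OddWellCoveredUnicyclicOn G S)
    (hno : NoStemOfDegreeTwo G S) (ha : a ∈ stemsIn G S) (hs : s ∈ nbrIn G S a)
    (hb : b ∈ nbrIn G S a) (hd : d ∈ nbrIn G S a) (hsb : s ≠ b) (hsd : s ≠ d) (hbd : b ≠ d) :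
    nbrIn G S a = {s, b, d} := by
  refine (Finset.eq_of_subset_of_card_le (by grind) ?_).symm
  rw [h.card_nbrIn_of_mem_stemsIn hno ha, Finset.card_eq_three.2 ⟨s, b, d, hsb, hsd, hbd, rfl⟩]

theorem notMem_stemsIn_of_four_cycle [DecidableEq V] (h : OddWellCoveredUnicyclicOn G S)
    (hno : NoStemOfDegreeTwo G S) (ha : a ∈ stemsIn G S) (hca : c ≠ a) (hdb : d ≠ b)
    (hNb : nbrIn G S b = {a, c}) (hNc : nbrIn G S c = {b, d}) (had : G.Adj a d) :
    d ∉ stemsIn G S := by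
  intro hd
  have hb : ∀ z, z ∈ S ∧ G.Adj b z ↔ z = a ∨ z = c := by simp [← mem_nbrIn, hNb]
  have hc : ∀ z, z ∈ S ∧ G.Adj c z ↔ z = b ∨ z = d := by simp [← mem_nbrIn, hNc]
  obtain ⟨haS, s, hsS, hNs⟩ := mem_stemsIn.1 ha
  obtain ⟨hdS, t, htS, hNt⟩ := mem_stemsIn.1 hd
  have hs : ∀ z, z ∈ S ∧ G.Adj s z ↔ z = a := by simp [← mem_nbrIn, hNs]
  have ht : ∀ z, z ∈ S ∧ G.Adj t z ↔ z = d := by simp [← mem_nbrIn, hNt]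
  have hsb : s ≠ b := by grind [hb c]
  have htc : t ≠ c := by grind [hc b]
  have hst : s ≠ t := by grind [had.ne]
  have hNa : nbrIn G S a = {s, b, d} := h.nbrIn_eq_triple hno ha
    (by grind [mem_nbrIn, G.adj_comm]) (by grind [mem_nbrIn, G.adj_comm])
    (by grind [mem_nbrIn]) hsb (by grind [G.adj_comm]) hdb.symm
  have hNd : nbrIn G S d = {t, c, a} := h.nbrIn_eq_triple hno hd
    (by grind [mem_nbrIn, G.adj_comm]) (by grind [mem_nbrIn, G.adj_comm])
    (by grind [mem_nbrIn, G.adj_comm]) htc (by grind [G.adj_comm]) hca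
  have ha' : ∀ z, z ∈ S ∧ G.Adj a z ↔ z = s ∨ z = b ∨ z = d := by simp [← mem_nbrIn, hNa]
  have hd' : ∀ z, z ∈ S ∧ G.Adj d z ↔ z = t ∨ z = c ∨ z = a := by simp [← mem_nbrIn, hNd]
  have hS : {a, b, c, d, s, t} = S := h.eq_of_closed _ (by grind) (by simp) fun x hx y hy hxy ↦ by
    simp only [Finset.mem_insert, Finset.mem_singleton] at hx ⊢
    rcases hx with rfl | rfl | rfl | rfl | rfl | rfl <;> grind
  have hcard : S.card = 6 := by
    rw [← hS]
    grind [(hb c).2 (.inr rfl), (hc d).2 (.inr rfl), G.ne_of_adj]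
  have hodd := h.odd_card
  rw [hcard] at hodd
  exact absurd hodd (by decide)

theorem not_adj_of_mem_stemsIn (h : OddWellCoveredUnicyclicOn G S) (hno : NoStemOfDegreeTwo G S)
    (ha : a ∈ stemsIn G S) (hbS : b ∈ S) (hbL : b ∉ leavesIn G S) (hbA : b ∉ stemsIn G S) :
    ¬ G.Adj a b := by
  classical
  intro hab
  obtain ⟨c, d, hca, hdb, hNb, hNc, had⟩ := h.exists_four_cycle hno ha hbS hbL hbA hab
  have hdA := h.notMem_stemsIn_of_four_cycle hno ha hca hdb hNb hNc had
  have hb : ∀ z, z ∈ S ∧ G.Adj b z ↔ z = a ∨ z = c := by simp [← mem_nbrIn, hNb]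
  have hc : ∀ z, z ∈ S ∧ G.Adj c z ↔ z = b ∨ z = d := by simp [← mem_nbrIn, hNc]
  obtain ⟨haS, s, hsS, hNs⟩ := mem_stemsIn.1 ha
  have hs : ∀ z, z ∈ S ∧ G.Adj s z ↔ z = a := by simp [← mem_nbrIn, hNs]
  obtain ⟨hcS, -⟩ := (hb c).2 (.inr rfl)
  obtain ⟨hdS, hcd⟩ := (hc d).2 (.inr rfl)
  have hdL : d ∉ leavesIn G S := by
    intro hdL
    obtain ⟨-, u, hdu⟩ := mem_leavesIn.1 hdL
    have hd : ∀ z, z ∈ S ∧ G.Adj d z ↔ z = u := by simp [← mem_nbrIn, hdu]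
    exact hca (((hd c).1 ⟨hcS, hcd.symm⟩).trans ((hd a).1 ⟨haS, had.symm⟩).symm)
  obtain ⟨x, -, hNd⟩ :=
    exists_nbrIn_eq_pair (h.card_nbrIn_of_notMem hno hdS hdL hdA) hcS hcd.symm
  have hd : ∀ z, z ∈ S ∧ G.Adj d z ↔ z = c ∨ z = x := by simp [← mem_nbrIn, hNd]
  have hxa : x = a := by grind [G.adj_comm]
  have hsb : s ≠ b := by grind
  have hsd : s ≠ d := by grind [G.adj_comm]
  have hle := h.wellCovered.card_le_card_of_exchange (X := {a, c}) (R := {a, c}) (N := {s, b, d})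
    (by grind) (by grind [IsIndepFinset, G.adj_comm, G.irrefl]) subset_rfl (by grind)
    (by grind [IsIndepFinset, G.adj_comm, G.irrefl]) (by grind) (by grind)
  rw [Finset.card_eq_three.2 ⟨s, b, d, hsb, hsd, hdb.symm, rfl⟩, Finset.card_pair hca.symm] at hle
  omega

theorem card_nbrIn_eq_two (h : OddWellCoveredUnicyclicOn G S) (hno : NoStemOfDegreeTwo G S)
    (hv : v ∈ S) : (nbrIn G S v).card = 2 := by
  classical
  have hcard := (h.card_nbrIn_eq hno).1
  have hdisj : Disjoint (leavesIn G S) (stemsIn G S) :=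
    Finset.disjoint_left.2 fun v hvL hvA ↦ h.notMem_leavesIn hno hvA hvL
  have hempty : leavesIn G S = ∅ := by
    by_contra hne
    have hS := h.eq_of_closed (leavesIn G S ∪ stemsIn G S)
      (Finset.union_subset (Finset.filter_subset _ _) (Finset.filter_subset _ _))
      ((Finset.nonempty_iff_ne_empty.2 hne).inl) fun a ha b hb hab ↦ by
        by_contra hbLA
        rw [Finset.mem_union, not_or] at hbLA
        rcases Finset.mem_union.1 ha with haL | haA
        · obtain ⟨haS, u, hau⟩ := mem_leavesIn.1 haL
          obtain rfl : b = u := Finset.mem_singleton.1 (hau ▸ mem_nbrIn.2 ⟨hb, hab⟩)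
          exact hbLA.2 (mem_stemsIn.2 ⟨hb, a, haS, hau⟩)
        · exact h.not_adj_of_mem_stemsIn hno haA hb hbLA.1 hbLA.2 hab
    have hodd := h.odd_card
    rw [← hS, Finset.card_union_of_disjoint hdisj, hcard, Nat.odd_iff] at hodd
    omega
  have hvL : v ∉ leavesIn G S := hempty ▸ Finset.notMem_empty v
  have hvA : v ∉ stemsIn G S := by
    rw [hempty, Finset.card_empty] at hcard
    exact Finset.card_eq_zero.1 hcard.symm ▸ Finset.notMem_empty v
  exact h.card_nbrIn_of_notMem hno hv hvL hvA

end OddWellCoveredUnicyclicOn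

end Regular

section Cycle

variable {V : Type*} {G : SimpleGraph V} {S : Finset V} {m : ℕ}

theorem ncard_neighborSet_induce (v : (S : Set V)) :
    ((G.induce (S : Set V)).neighborSet v).ncard = (nbrIn G S v).card := by
  have himage : Subtype.val '' (G.induce (S : Set V)).neighborSet v = (nbrIn G S v : Set V) := by
    ext z
    simp [mem_nbrIn, and_comm]
  rw [← Set.ncard_image_of_injective _ Subtype.val_injective, himage, Set.ncard_coe_finset]

theorem exists_injective_cycleGraph_hom (hS : S.Nonempty)
    (hdeg : ∀ v ∈ S, (nbrIn G S v).card = 2) :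
    ∃ m, ∃ f : cycleGraph (m + 3) →g G, Function.Injective f ∧ ∀ i, f i ∈ S := by
  have hcycles : (G.induce (S : Set V)).IsCycles := fun v _ ↦
    (ncard_neighborSet_induce v).trans (hdeg v v.2)
  obtain ⟨v, hv⟩ := hS
  have hne : ((G.induce (S : Set V)).neighborSet ⟨v, hv⟩).Nonempty := by
    refine Set.nonempty_of_ncard_ne_zero ?_
    rw [ncard_neighborSet_induce, hdeg v hv]
    exact two_ne_zero
  obtain ⟨p, hp, -⟩ := hcycles.exists_cycle_toSubgraph_verts_eq_connectedComponentSupp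
    (ConnectedComponent.connectedComponentMk_mem) hne
  obtain ⟨m, hm⟩ := Nat.exists_eq_add_of_le' hp.three_le_length
  obtain ⟨f⟩ := (cycleGraph_isContained_iff (by omega : 2 < m + 3)).2 ⟨_, p, hp, hm⟩
  exact ⟨m, (Embedding.induce _).toHom.comp f.toHom,
    Subtype.val_injective.comp f.injective, fun i ↦ (f i).2⟩

theorem nbrIn_eq_image_neighborFinset [DecidableEq V] {f : cycleGraph (m + 3) →g G}
    (hf : Function.Injective f) (hfS : ∀ i, f i ∈ S) (hdeg : ∀ v ∈ S, (nbrIn G S v).card = 2)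
    (i : Fin (m + 3)) : nbrIn G S (f i) = ((cycleGraph (m + 3)).neighborFinset i).image f := by
  refine (Finset.eq_of_subset_of_card_le (fun z hz ↦ ?_) ?_).symm
  · obtain ⟨j, hj, rfl⟩ := Finset.mem_image.1 hz
    exact mem_nbrIn.2 ⟨hfS j, f.map_adj ((mem_neighborFinset _ _ _).1 hj)⟩
  · rw [hdeg _ (hfS i), Finset.card_image_of_injective _ hf, card_neighborFinset_eq_degree,
      cycleGraph_degree_three_le]

theorem exists_cycleGraph_embedding (hS : S.Nonempty) (hdeg : ∀ v ∈ S, (nbrIn G S v).card = 2) :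
    ∃ m, ∃ c : cycleGraph (m + 3) ↪g G, (∀ i, c i ∈ S) ∧
      ∀ i, ∀ v ∈ S, G.Adj (c i) v → ∃ j, c j = v := by
  classical
  obtain ⟨m, f, hf, hfS⟩ := exists_injective_cycleGraph_hom hS hdeg
  have hclosed : ∀ i, ∀ v ∈ S, G.Adj (f i) v → ∃ j, (cycleGraph (m + 3)).Adj i j ∧ f j = v := by
    intro i v hv hiv
    have hmem := mem_nbrIn.2 ⟨hv, hiv⟩
    rw [nbrIn_eq_image_neighborFinset hf hfS hdeg, Finset.mem_image] at hmem
    simpa only [mem_neighborFinset] using hmem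
  refine ⟨m, ⟨⟨f, hf⟩, fun {i j} ↦ ⟨fun hij ↦ ?_, f.map_adj⟩⟩, hfS, fun i v hv hiv ↦ ?_⟩
  · obtain ⟨k, hik, hkj⟩ := hclosed i (f j) (hfS j) hij
    exact hf hkj ▸ hik
  · obtain ⟨j, -, hj⟩ := hclosed i v hv hiv
    exact ⟨j, hj⟩

theorem cycleGraph_adj_iff_val {i j : Fin (m + 3)} : (cycleGraph (m + 3)).Adj i j ↔
    i.val + 1 = j.val ∨ j.val + 1 = i.val ∨ i.val + (m + 2) = j.val ∨ j.val + (m + 2) = i.val := by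
  rw [cycleGraph_adj']
  rcases lt_trichotomy i j with hij | rfl | hij
  · rw [Fin.coe_sub_iff_lt.2 hij, Fin.coe_sub_iff_le.2 hij.le]
    omega
  · simp
  · rw [Fin.coe_sub_iff_lt.2 hij, Fin.coe_sub_iff_le.2 hij.le]
    omega

theorem WellCoveredOn.cycleGraph_length_le (c : cycleGraph (m + 3) ↪g G)
    (h : WellCoveredOn G (Finset.univ.map c.toEmbedding)) : m + 3 ≤ 7 := by
  classical
  by_contra! hm
  let v (i : ℕ) : V := c (Fin.ofNat (m + 3) i)
  have hv : ∀ i, v i ∈ Finset.univ.map c.toEmbedding := fun i ↦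
    Finset.mem_map_of_mem _ (Finset.mem_univ _)
  have hadj : ∀ i < m + 3, ∀ j < m + 3, G.Adj (v i) (v j) ↔
      i + 1 = j ∨ j + 1 = i ∨ i + (m + 2) = j ∨ j + (m + 2) = i := fun i hi j hj ↦ by
    rw [c.map_adj_iff, cycleGraph_adj_iff_val, Fin.val_ofNat, Fin.val_ofNat, Nat.mod_eq_of_lt hi,
      Nat.mod_eq_of_lt hj]
  have hsurj : ∀ z ∈ Finset.univ.map c.toEmbedding, ∃ i < m + 3, v i = z := by
    simp only [Finset.mem_map, Finset.mem_univ, true_and, forall_exists_index]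
    rintro _ i rfl
    exact ⟨i, i.is_lt, congrArg c (Fin.ofNat_val_eq_self i)⟩
  clear_value v
  have hnbr : ∀ i, 0 < i → i < m + 2 → ∀ z ∈ Finset.univ.map c.toEmbedding, G.Adj (v i) z →
      z = v (i - 1) ∨ z = v (i + 1) := by
    intro i hi hi' z hz hiz
    obtain ⟨j, _, rfl⟩ := hsurj z hz
    grind
  have hne : v 2 ≠ v 4 := by grind [hadj 1 (by omega)]
  have hle := h.card_le_card_of_exchange (X := {v 0, v 3, v 6}) (R := {v 3}) (N := {v 2, v 4})
    (by grind) (by simp only [IsIndepFinset]; grind) (by grind) (by grind)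
    (by simp only [IsIndepFinset]; grind) (by grind) (by grind)
  rw [Finset.card_pair hne, Finset.card_singleton] at hle
  omega

end Cycle

section CycleTreeRep

variable {V W : Type*} [DecidableEq V] [DecidableEq W] {G : SimpleGraph V} {H : SimpleGraph W}
  {S U U' : Finset V} {r : V}

theorem RootedTreeOn.map (f : G ↪g H) (h : RootedTreeOn G U r) :
    RootedTreeOn H (U.map f.toEmbedding) (f r) := by
  induction h with
  | single r => exact .single (f r)
  | join _ _ hdisj hadj honly ihA ihB =>
    rw [Finset.map_union]
    refine ihA.join ihB (Finset.disjoint_map _ |>.2 hdisj) (f.map_adj_iff.2 hadj) ?_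
    simpa using honly

theorem TreeRep.map (f : G ↪g H) (h : TreeRep G S U U') :
    TreeRep H (S.map f.toEmbedding) (U.map f.toEmbedding) (U'.map f.toEmbedding) where
  exists_root := let ⟨r, hr⟩ := h.exists_root; ⟨f r, hr.map f⟩
  subset := Finset.map_subset_map.2 h.subset
  deletable_subset := Finset.map_subset_map.2 h.deletable_subset
  eval_sdiff l hl D hD := by
    obtain ⟨E, hE, rfl⟩ := Finset.subset_map_iff.1 hD
    rw [← Finset.map_sdiff, ← Finset.map_sdiff, indepSum_map, indepSum_map, Finset.card_map]
    exact h.eval_sdiff l hl E hE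

theorem treeRep_cycleGraph_three : TreeRep (cycleGraph 3) Finset.univ {0, 2} {0, 2} where
  exists_root := ⟨2, (RootedTreeOn.single 2).insert_leaf (w := 2) (by decide) (by decide)
    (by decide) (by decide)⟩
  subset := Finset.subset_univ _
  deletable_subset := subset_rfl
  eval_sdiff l hl D hD := by
    have hl1 : 1 + l ≠ 0 := by positivity
    have hadj : ∀ i j, (cycleGraph 3).Adj i j ↔ i = j + 1 ∨ j = i + 1 := by decide
    have huniv : (Finset.univ : Finset (Fin 3)) = {0, 1, 2} := rfl
    have hcard : ({0, 2} : Finset (Fin 3)).card = 2 := rfl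
    have hD1 : 1 ∉ D := fun h ↦ absurd (hD h) (by decide)
    rw [huniv, hcard]
    by_cases hD0 : 0 ∈ D <;> by_cases hD2 : 2 ∈ D <;>
    simp [indepSum_insert, Finset.filter_insert, Finset.filter_singleton, hadj,
      indepSum_singleton, Finset.sdiff_eq_filter, hD0, hD1, hD2] <;>
    field_simp <;> ring

theorem treeRep_cycleGraph_five : TreeRep (cycleGraph 5) Finset.univ {0, 1, 2} {0, 2} where
  exists_root := ⟨2, ((RootedTreeOn.single 2).insert_leaf (u := 1) (w := 2) (by decide) (by decide)
    (by decide) (by decide)).insert_leaf (w := 1) (by decide) (by decide) (by decide) (by decide)⟩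
  subset := Finset.subset_univ _
  deletable_subset := by decide
  eval_sdiff l hl D hD := by
    have hl1 : 1 + l ≠ 0 := by positivity
    have hadj : ∀ i j, (cycleGraph 5).Adj i j ↔ i = j + 1 ∨ j = i + 1 := by decide
    have huniv : (Finset.univ : Finset (Fin 5)) = {0, 1, 2, 3, 4} := rfl
    have hcard : ({0, 1, 2} : Finset (Fin 5)).card = 3 := rfl
    have hD1 : 1 ∉ D := fun h ↦ absurd (hD h) (by decide)
    have hD3 : 3 ∉ D := fun h ↦ absurd (hD h) (by decide)
    have hD4 : 4 ∉ D := fun h ↦ absurd (hD h) (by decide)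
    rw [huniv, hcard]
    by_cases hD0 : 0 ∈ D <;> by_cases hD2 : 2 ∈ D <;>
    simp [indepSum_insert, Finset.filter_insert, Finset.filter_singleton, hadj,
      indepSum_singleton, Finset.sdiff_eq_filter, hD0, hD1, hD2, hD3, hD4] <;>
    field_simp <;> ring

theorem indepSum_cycleGraph_seven {R : Type*} [CommSemiring R] (x : R) :
    indepSum (cycleGraph 7) Finset.univ x = 1 + 7 * x + 14 * x ^ 2 + 7 * x ^ 3 := by
  have hadj : ∀ i j, (cycleGraph 7).Adj i j ↔ i = j + 1 ∨ j = i + 1 := by decide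
  have huniv : (Finset.univ : Finset (Fin 7)) = {0, 1, 2, 3, 4, 5, 6} := rfl
  rw [huniv]
  simp [indepSum_insert, Finset.filter_insert, Finset.filter_singleton, hadj,
    indepSum_singleton]
  ring

end CycleTreeRep

section IsPendantPair

variable {V : Type*} [DecidableEq V] {G : SimpleGraph V} {S s : Finset V} {u v w z : V}

namespace IsPendantPair

theorem card_insert_insert (hp : IsPendantPair G S w u v) :
    (insert u (insert v S)).card = S.card + 2 := by
  have huv : u ∉ insert v S := by simp [hp.stem_notMem, hp.adj_leaf.ne]
  rw [Finset.card_insert_of_notMem huv, Finset.card_insert_of_notMem hp.leaf_notMem]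

theorem nbrIn_stem (hp : IsPendantPair G S w u v) :
    nbrIn G (insert u (insert v S)) u = {v, w} := by
  ext z
  rw [mem_nbrIn]
  grind [IsPendantPair, G.irrefl]

theorem nbrIn_leaf (hp : IsPendantPair G S w u v) : nbrIn G (insert u (insert v S)) v = {u} := by
  ext z
  rw [mem_nbrIn]
  grind [IsPendantPair, G.irrefl, G.adj_comm]

theorem card_nbrIn (hp : IsPendantPair G S w u v) (hz : z ∈ S) :
    (nbrIn G (insert u (insert v S)) z).card = (nbrIn G S z).card + if z = w then 1 else 0 := by
  have hzv : ¬ G.Adj z v := fun h ↦ hp.leaf_not_adj z hz h.symm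
  split_ifs with hzw
  · have hnbr : nbrIn G (insert u (insert v S)) z = insert u (nbrIn G S z) := by
      ext y
      rw [Finset.mem_insert, mem_nbrIn, mem_nbrIn]
      grind [hp.adj_base.symm]
    rw [hnbr, Finset.card_insert_of_notMem fun h ↦ hp.stem_notMem (mem_nbrIn.1 h).1]
  · have hzu : ¬ G.Adj z u := fun h ↦ hzw (hp.eq_base_of_adj z hz h.symm)
    rw [add_zero]
    congr 1
    ext y
    rw [mem_nbrIn, mem_nbrIn]
    grind

theorem sum_card_nbrIn (hp : IsPendantPair G S w u v) :
    ∑ z ∈ insert u (insert v S), (nbrIn G (insert u (insert v S)) z).card =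
      ∑ z ∈ S, (nbrIn G S z).card + 4 := by
  have huv : u ∉ insert v S := by simp [hp.stem_notMem, hp.adj_leaf.ne]
  have hvw : v ≠ w := fun e ↦ hp.leaf_notMem (e ▸ hp.mem_base)
  rw [Finset.sum_insert huv, Finset.sum_insert hp.leaf_notMem, hp.nbrIn_stem, hp.nbrIn_leaf,
    Finset.card_pair hvw, Finset.card_singleton, Finset.sum_congr rfl fun z ↦ hp.card_nbrIn,
    Finset.sum_add_distrib, Finset.sum_ite_eq', if_pos hp.mem_base]
  omega

theorem isMaxIndepOn_insert_leaf (hp : IsPendantPair G S w u v) (hs : IsMaxIndepOn G S s) :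
    IsMaxIndepOn G (insert u (insert v S)) (insert v s) := by
  obtain ⟨hsS, hsi, hsmax⟩ := hs
  refine ⟨by grind, isIndepFinset_insert_iff.2 ⟨hsi, fun z hz ↦ hp.leaf_not_adj z (hsS hz)⟩, ?_⟩
  grind [hp.adj_leaf]

theorem wellCoveredOn (hp : IsPendantPair G S w u v)
    (h : WellCoveredOn G (insert u (insert v S))) : WellCoveredOn G S := by
  intro s t hs ht
  have hcard := h _ _ (hp.isMaxIndepOn_insert_leaf hs) (hp.isMaxIndepOn_insert_leaf ht)
  rwa [Finset.card_insert_of_notMem fun hv ↦ hp.leaf_notMem (hs.1 hv),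
    Finset.card_insert_of_notMem fun hv ↦ hp.leaf_notMem (ht.1 hv), add_left_inj] at hcard

theorem oddWellCoveredUnicyclicOn (hp : IsPendantPair G S w u v)
    (h : OddWellCoveredUnicyclicOn G (insert u (insert v S))) :
    OddWellCoveredUnicyclicOn G S where
  odd_card := by
    have hodd := h.odd_card
    rwa [hp.card_insert_insert, Nat.odd_add, iff_true_right even_two] at hodd
  eq_of_closed X hX hne hcl := by
    have hu := hp.stem_notMem
    have hv := hp.leaf_notMem
    by_cases hw : w ∈ X
    · have hT := h.eq_of_closed (insert u (insert v X)) (by grind) (by simp)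
        (by grind [IsPendantPair, G.adj_comm])
      exact hX.antisymm fun z hz ↦ by grind [Finset.ext_iff.1 hT z]
    · have hT := h.eq_of_closed X (by grind) hne (by grind [IsPendantPair, G.adj_comm])
      grind
  sum_card_nbrIn := by
    have hsum := h.sum_card_nbrIn
    rw [hp.sum_card_nbrIn, hp.card_insert_insert] at hsum
    omega
  wellCovered := hp.wellCoveredOn h.wellCovered

end IsPendantPair

theorem exists_isPendantPair (hu : u ∈ stemsIn G S) (hcard : (nbrIn G S u).card = 2) :
    ∃ T w v, S = insert u (insert v T) ∧ IsPendantPair G T w u v := by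
  obtain ⟨huS, v, hvS, hv⟩ := mem_stemsIn.1 hu
  have hNv : ∀ z, z ∈ S ∧ G.Adj v z ↔ z = u := by simp [← mem_nbrIn, hv]
  have hvu : G.Adj v u := ((hNv u).2 rfl).2
  obtain ⟨w, hwv, hw⟩ := exists_nbrIn_eq_pair hcard hvS hvu.symm
  have hNu : ∀ z, z ∈ S ∧ G.Adj u z ↔ z = v ∨ z = w := by simp [← mem_nbrIn, hw]
  refine ⟨(S.erase u).erase v, w, v, ?_, ?_, ?_, ?_, hvu.symm, ?_, ?_, ?_⟩ <;>
    grind [G.irrefl]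

end IsPendantPair

section AttachedPairs

variable {V : Type*} [DecidableEq V] {G : SimpleGraph V} {C S A M J X U U' : Finset V}
  {a a' u v w y z z' : V}

/-- The set `S` arises from `C` by successively attaching pendant pairs at vertices of `C` or at
the stems of earlier pairs; `A` is the set of the stems. -/
inductive AttachedPairs (G : SimpleGraph V) (C : Finset V) : Finset V → Finset V → Prop
  | core : AttachedPairs G C C ∅
  | attach {S A : Finset V} {w u v : V} (h : AttachedPairs G C S A) (hp : IsPendantPair G S w u v)
      (hw : w ∈ C ∪ A) : AttachedPairs G C (insert u (insert v S)) (insert u A)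

namespace AttachedPairs

theorem core_subset (h : AttachedPairs G C S A) : C ⊆ S := by
  induction h with
  | core => exact subset_rfl
  | attach _ _ _ ih => grind

theorem stems_subset (h : AttachedPairs G C S A) : A ⊆ S := by
  induction h with
  | core => exact Finset.empty_subset C
  | attach _ _ _ ih => grind

theorem disjoint_core_stems (h : AttachedPairs G C S A) : Disjoint C A := by
  induction h with
  | core => exact Finset.disjoint_empty_right C
  | attach h hp _ ih =>
    exact Finset.disjoint_insert_right.2 ⟨fun hu ↦ hp.stem_notMem (h.core_subset hu), ih⟩

theorem card_eq (h : AttachedPairs G C S A) : S.card = C.card + 2 * A.card := by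
  induction h with
  | core => simp
  | attach h hp hw ih =>
    rw [hp.card_insert_insert, ih,
      Finset.card_insert_of_notMem fun hu ↦ hp.stem_notMem (h.stems_subset hu)]
    ring

theorem exists_adj_of_notMem (h : AttachedPairs G C S A) (hz : z ∈ S) (hzCA : z ∉ C ∪ A) :
    ∃ u ∈ S, (∀ y ∈ S, G.Adj z y → y = u) ∧ ∃ w ∈ S, w ≠ z ∧ G.Adj u w := by
  induction h with
  | core => grind
  | @attach S A w u v _ hp hw ih =>
    by_cases hzS : z ∈ S
    · obtain ⟨t, ht, hzt, w', hw', hne, htw⟩ := ih hzS (by grind)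
      exact ⟨t, by grind, by grind [IsPendantPair, G.adj_comm], w', by grind, hne, htw⟩
    · obtain rfl : z = v := by grind
      refine ⟨u, by grind, by grind [IsPendantPair, G.irrefl], w, ?_, ?_, hp.adj_base⟩ <;>
        grind [IsPendantPair]

theorem eq_of_adj_core (h : AttachedPairs G C S A) (ha : a ∈ A) (hz : z ∈ C) (hz' : z' ∈ C)
    (haz : G.Adj a z) (haz' : G.Adj a z') : z = z' := by
  induction h with
  | core => exact absurd ha (Finset.notMem_empty a)
  | attach h hp _ ih =>
    have hC := h.core_subset
    grind [IsPendantPair]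

theorem not_adj_of_adj_core (h : AttachedPairs G C S A) (ha : a ∈ A) (ha' : a' ∈ A) (hz : z ∈ C)
    (hz' : z' ∈ C) (haz : G.Adj a z) (haz' : G.Adj a' z') : ¬ G.Adj a a' := by
  induction h with
  | core => exact absurd ha (Finset.notMem_empty a)
  | @attach S A w u v h hp _ ih =>
    have hstem : ∀ b ∈ A, ∀ y ∈ C, G.Adj u y → ¬ G.Adj u b := fun b hb y hy hy' hb' ↦ by
      have hyb : y = b := (hp.eq_base_of_adj y (h.core_subset hy) hy').trans
        (hp.eq_base_of_adj b (h.stems_subset hb) hb').symm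
      exact Finset.disjoint_left.1 h.disjoint_core_stems hy (hyb ▸ hb)
    grind [G.irrefl, G.adj_comm]

theorem card_le_of_isIndepFinset (h : AttachedPairs G C S A) (hM : M ⊆ S)
    (hi : IsIndepFinset G M) : M.card ≤ A.card + (M ∩ C).card := by
  induction h generalizing M with
  | core => simp [Finset.inter_eq_left.2 hM]
  | @attach S A w u v h hp _ ih =>
    have hinter : M ∩ S ∩ C = M ∩ C := by
      rw [Finset.inter_assoc, Finset.inter_eq_right.2 h.core_subset]
    have hle := ih (M := M ∩ S) Finset.inter_subset_right (by grind [IsIndepFinset])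
    rw [hinter] at hle
    have hpair : (M \ S).card ≤ 1 := by
      rw [Finset.card_le_one]
      grind [IsIndepFinset, hp.adj_leaf, G.adj_comm]
    have hcard := Finset.card_sdiff_add_card_inter M S
    rw [Finset.card_insert_of_notMem fun hu ↦ hp.stem_notMem (h.stems_subset hu)]
    omega

theorem exists_isIndepFinset (h : AttachedPairs G C S A) (hJ : J ⊆ C) (hi : IsIndepFinset G J) :
    ∃ t ⊆ S, IsIndepFinset G t ∧ t.card = A.card + J.card := by
  induction h with
  | core => exact ⟨J, hJ, hi, by simp⟩
  | @attach S A w u v h hp _ ih =>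
    obtain ⟨t, htS, hti, hcard⟩ := ih
    refine ⟨insert v t, by grind,
      isIndepFinset_insert_iff.2 ⟨hti, fun z hz ↦ hp.leaf_not_adj z (htS hz)⟩, ?_⟩
    rw [Finset.card_insert_of_notMem fun hv ↦ hp.leaf_notMem (htS hv),
      Finset.card_insert_of_notMem fun hu ↦ hp.stem_notMem (h.stems_subset hu), hcard]
    ring

-- Compare a maximal independent set containing `X` with one containing `J` and all leaves outside
-- the core.
theorem card_le_card_inter_core (h : AttachedPairs G C S A) (hS : WellCoveredOn G S) (hX : X ⊆ S)
    (hXi : IsIndepFinset G X) (hdom : ∀ z ∈ C, z ∉ X → ∃ y ∈ X, G.Adj z y) (hJ : J ⊆ C)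
    (hJi : IsIndepFinset G J) : J.card ≤ (X ∩ C).card := by
  obtain ⟨M, hXM, hM⟩ := exists_isMaxIndepOn_superset hX hXi
  obtain ⟨t, htS, hti, hcard⟩ := h.exists_isIndepFinset hJ hJi
  have htM := hS.card_le_card hM htS hti
  have hMA := h.card_le_of_isIndepFinset hM.1 hM.2.1
  have hMX : M ∩ C ⊆ X ∩ C := fun z hz ↦ by
    obtain ⟨hzM, hzC⟩ := Finset.mem_inter.1 hz
    refine Finset.mem_inter.2 ⟨?_, hzC⟩
    by_contra hzX
    obtain ⟨y, hyX, hzy⟩ := hdom z hzC hzX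
    exact hM.2.1 z hzM y (hXM hyX) hzy
  have := Finset.card_le_card hMX
  omega

theorem treeRep (h : AttachedPairs G C S A) (hC : TreeRep G C U U')
    (hU' : ∀ a ∈ A, ∀ z ∈ C, G.Adj a z → z ∈ U') : TreeRep G S (U ∪ A) (U' ∪ A) := by
  induction h with
  | core => rwa [Finset.union_empty, Finset.union_empty]
  | attach _ hp hw ih =>
    rw [Finset.union_insert, Finset.union_insert]
    refine (ih fun a ha ↦ hU' a (Finset.mem_insert_of_mem ha)).insert_pendantPair hp ?_
    rcases Finset.mem_union.1 hw with hwC | hwA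
    · exact Finset.mem_union_left _ (hU' _ (Finset.mem_insert_self _ _) _ hwC hp.adj_base)
    · exact Finset.mem_union_right _ hwA

theorem stems_eq_empty (h : AttachedPairs G C S A) (hfree : ∀ z ∈ C, ∀ a ∈ A, ¬ G.Adj a z) :
    A = ∅ := by
  induction h with
  | core => rfl
  | @attach S A w u v _ hp hw ih =>
    have hA : A = ∅ := ih fun z hz a ha ↦ hfree z hz a (Finset.mem_insert_of_mem ha)
    rw [hA, Finset.union_empty] at hw
    exact absurd hp.adj_base (hfree w hw u (Finset.mem_insert_self u A))

theorem base_mem (h : AttachedPairs G C S A) (hp : IsPendantPair G S w u v)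
    (hwc : WellCoveredOn G (insert u (insert v S))) : w ∈ C ∪ A := by
  by_contra hw
  obtain ⟨t, htS, hwt, z, hzS, hzw, htz⟩ := h.exists_adj_of_notMem hp.mem_base hw
  obtain ⟨hwS, huS, hvS, huv, huw, hu, hv⟩ := hp
  have hle := hwc.card_le_card_of_exchange (X := {z, u}) (R := {u}) (N := {v, w}) (by grind)
    (by grind [IsIndepFinset, G.adj_comm, G.irrefl]) (by grind) (by grind)
    (by grind [IsIndepFinset, G.adj_comm, G.irrefl]) (by grind [G.adj_comm])
    (by grind [G.adj_comm, G.irrefl])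
  rw [Finset.card_pair (by grind), Finset.card_singleton] at hle
  omega

end AttachedPairs

end AttachedPairs

section CycleCore

variable {V : Type*} [DecidableEq V] {G : SimpleGraph V} {S A : Finset V} {a b : V} {m : ℕ}

theorem OddWellCoveredUnicyclicOn.exists_attachedPairs (h : OddWellCoveredUnicyclicOn G S) :
    ∃ m, Even m ∧ m ≤ 4 ∧ ∃ (c : cycleGraph (m + 3) ↪g G) (A : Finset V),
      AttachedPairs G (Finset.univ.map c.toEmbedding) S A := by
  induction hn : S.card using Nat.strong_induction_on generalizing S with
  | _ n ih =>
    by_cases hno : NoStemOfDegreeTwo G S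
    · obtain ⟨m, c, hcS, hc⟩ := exists_cycleGraph_embedding (Finset.card_pos.1 h.odd_card.pos)
        fun v ↦ h.card_nbrIn_eq_two hno
      have hS : Finset.univ.map c.toEmbedding = S :=
        h.eq_of_closed _ (by simpa [Finset.subset_iff] using hcS) (by simp) (by simpa using hc)
      have hlength : m + 3 ≤ 7 := WellCoveredOn.cycleGraph_length_le c (hS ▸ h.wellCovered)
      have hodd := h.odd_card
      rw [← hS, Finset.card_map, Finset.card_fin] at hodd
      exact ⟨m, by grind, by omega, c, ∅, hS ▸ .core⟩
    · obtain ⟨u, hu, hcard⟩ : ∃ u ∈ stemsIn G S, (nbrIn G S u).card = 2 := by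
        simpa [NoStemOfDegreeTwo] using hno
      obtain ⟨T, w, v, rfl, hp⟩ := exists_isPendantPair hu hcard
      obtain ⟨m, hm, hm4, c, A, hA⟩ := ih T.card (by have := hp.card_insert_insert; omega)
        (hp.oddWellCoveredUnicyclicOn h) rfl
      exact ⟨m, hm, hm4, c, insert u A, hA.attach hp (hA.base_mem hp h.wellCovered)⟩

theorem exists_cycleGraph_embedding_add_right {V : Type*} {G : SimpleGraph V}
    (c : cycleGraph (m + 3) ↪g G) (k : Fin (m + 3)) :
    ∃ c' : cycleGraph (m + 3) ↪g G, (∀ i, c' i = c (i + k)) ∧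
      Finset.univ.map c'.toEmbedding = Finset.univ.map c.toEmbedding := by
  let f : cycleGraph (m + 3) ≃g cycleGraph (m + 3) :=
    ⟨Equiv.addRight k, by simp [cycleGraph_adj]⟩
  refine ⟨f.toEmbedding.trans c, fun i ↦ rfl, ?_⟩
  ext z
  simp only [Finset.mem_map, Finset.mem_univ, true_and]
  exact (Equiv.addRight k).surjective.exists (p := fun i ↦ c i = z) |>.symm

namespace AttachedPairs

section

variable {c : cycleGraph (m + 3) ↪g G} {i j : Fin (m + 3)}

theorem stem_ne (h : AttachedPairs G (Finset.univ.map c.toEmbedding) S A) (ha : a ∈ A) :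
    a ≠ c i := by
  rintro rfl
  exact Finset.disjoint_right.1 h.disjoint_core_stems ha (by simp)

theorem not_adj_of_ne (h : AttachedPairs G (Finset.univ.map c.toEmbedding) S A) (ha : a ∈ A)
    (hai : G.Adj a (c i)) (hij : i ≠ j) : ¬ G.Adj a (c j) := fun haj ↦
  hij (c.injective (h.eq_of_adj_core ha (by simp) (by simp) hai haj))

theorem not_adj_stem (h : AttachedPairs G (Finset.univ.map c.toEmbedding) S A) (ha : a ∈ A)
    (hb : b ∈ A) (hai : G.Adj a (c i)) (hbj : G.Adj b (c j)) : ¬ G.Adj a b :=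
  h.not_adj_of_adj_core ha hb (by simp) (by simp) hai hbj

theorem core_mem (h : AttachedPairs G (Finset.univ.map c.toEmbedding) S A) : c i ∈ S :=
  h.core_subset (by simp)

end

theorem exists_forall_not_adj {c : cycleGraph (m + 3) ↪g G}
    (h : AttachedPairs G (Finset.univ.map c.toEmbedding) S A) (hS : WellCoveredOn G S) :
    ∃ i, ∀ a ∈ A, ¬ G.Adj a (c i) := by
  by_contra! hall
  choose f hf hadj using hall
  have hle := h.card_le_card_inter_core hS (X := Finset.univ.image f) (J := {c 0})
    (by grind [h.stems_subset])
    (by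
      simp only [IsIndepFinset, Finset.forall_mem_image]
      exact fun i _ j _ ↦ h.not_adj_stem (hf i) (hf j) (hadj i) (hadj j))
    (by simpa using fun i _ ↦ ⟨i, (hadj i).symm⟩) (by simp) (by simp [IsIndepFinset])
  have hinter : Finset.univ.image f ∩ Finset.univ.map c.toEmbedding = ∅ := by
    ext z
    simpa using fun i hi j hj ↦ h.stem_ne (hf i) (hi.trans hj.symm)
  rw [hinter] at hle
  simp at hle

theorem not_adj_of_adj_zero_five {c : cycleGraph 5 ↪g G}
    (h : AttachedPairs G (Finset.univ.map c.toEmbedding) S A) (hS : WellCoveredOn G S)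
    (ha : a ∈ A) (hb : b ∈ A) (ha0 : G.Adj a (c 0)) : ¬ G.Adj b (c 1) := by
  intro hb1
  have hadj : ∀ i j, (cycleGraph 5).Adj i j ↔ i = j + 1 ∨ j = i + 1 := by decide
  have ha3 := h.not_adj_of_ne ha ha0 (j := 3) (by decide)
  have hb3 := h.not_adj_of_ne hb hb1 (j := 3) (by decide)
  have hab := h.not_adj_stem ha hb ha0 hb1
  have hle := h.card_le_card_inter_core hS (X := {a, b, c 3}) (J := {c 0, c 2})
    (by simp [Finset.insert_subset_iff, h.stems_subset ha, h.stems_subset hb, h.core_mem])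
    (by simp [IsIndepFinset, ha3, hb3, hab, G.adj_comm b a, G.adj_comm (c 3)])
    (by
      simp only [Finset.forall_mem_map, Finset.mem_univ, true_imp_iff]
      intro i hi
      fin_cases i <;> simp [ha0.symm, hb1.symm, hadj] at hi ⊢)
    (by simp [Finset.insert_subset_iff])
    (by simp [IsIndepFinset, hadj])
  rw [Finset.insert_inter_of_notMem (Finset.disjoint_right.1 h.disjoint_core_stems ha),
    Finset.insert_inter_of_notMem (Finset.disjoint_right.1 h.disjoint_core_stems hb)] at hle
  simp [c.injective.eq_iff] at hle

theorem not_adj_zero_seven {c : cycleGraph 7 ↪g G}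
    (h : AttachedPairs G (Finset.univ.map c.toEmbedding) S A) (hS : WellCoveredOn G S)
    (ha : a ∈ A) : ¬ G.Adj a (c 0) := by
  intro ha0
  have hadj : ∀ i j, (cycleGraph 7).Adj i j ↔ i = j + 1 ∨ j = i + 1 := by decide
  have ha2 := h.not_adj_of_ne ha ha0 (j := 2) (by decide)
  have ha5 := h.not_adj_of_ne ha ha0 (j := 5) (by decide)
  have hle := h.card_le_card_inter_core hS (X := {a, c 2, c 5}) (J := {c 0, c 2, c 4})
    (by simp [Finset.insert_subset_iff, h.stems_subset ha, h.core_mem])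
    (by simp [IsIndepFinset, ha2, ha5, G.adj_comm _ a, hadj])
    (by
      simp only [Finset.forall_mem_map, Finset.mem_univ, true_imp_iff]
      intro i hi
      fin_cases i <;> simp [ha0.symm, hadj] at hi ⊢)
    (by simp [Finset.insert_subset_iff])
    (by simp [IsIndepFinset, hadj])
  rw [Finset.insert_inter_of_notMem (Finset.disjoint_right.1 h.disjoint_core_stems ha)] at hle
  simp [c.injective.eq_iff, Finset.insert_inter_of_mem] at hle

theorem exists_treeRep {c : cycleGraph (m + 3) ↪g G} {U U' : Finset (Fin (m + 3))}
    (h : AttachedPairs G (Finset.univ.map c.toEmbedding) S A) (k : Fin (m + 3))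
    (hrep : TreeRep (cycleGraph (m + 3)) Finset.univ U U') (hU : 2 * U.card = m + 4)
    (hk : ∀ i, ∀ a ∈ A, G.Adj a (c (i + k)) → i ∈ U') :
    ∃ T T', TreeRep G S T T' ∧ 2 * T.card = S.card + 1 := by
  obtain ⟨c', hc', hmap⟩ := exists_cycleGraph_embedding_add_right c k
  have hcard := h.card_eq
  rw [← hmap] at h hcard
  refine ⟨_, _, h.treeRep (hrep.map c') ?_, ?_⟩
  · simp only [Finset.forall_mem_map, Finset.mem_map']
    exact fun a ha i _ hai ↦ hk i a ha (hc' i ▸ hai)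
  · have hdisj := h.disjoint_core_stems.mono_left (Finset.map_subset_map.2 (Finset.subset_univ U))
    rw [Finset.card_union_of_disjoint hdisj, Finset.card_map]
    rw [Finset.card_map, Finset.card_fin] at hcard
    omega

theorem exists_treeRep_three {c : cycleGraph 3 ↪g G}
    (h : AttachedPairs G (Finset.univ.map c.toEmbedding) S A) (hS : WellCoveredOn G S) :
    ∃ T T', TreeRep G S T T' ∧ 2 * T.card = S.card + 1 := by
  obtain ⟨i, hi⟩ := h.exists_forall_not_adj hS
  refine h.exists_treeRep (i - 1) treeRep_cycleGraph_three rfl fun j a ha haj ↦ ?_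
  have hj : j ≠ 1 := by
    rintro rfl
    exact hi a ha (by simpa using haj)
  have hmem : ∀ j : Fin 3, j ≠ 1 → j ∈ ({0, 2} : Finset (Fin 3)) := by decide
  exact hmem j hj

theorem exists_treeRep_five {c : cycleGraph 5 ↪g G}
    (h : AttachedPairs G (Finset.univ.map c.toEmbedding) S A) (hS : WellCoveredOn G S) :
    ∃ T T', TreeRep G S T T' ∧ 2 * T.card = S.card + 1 := by
  classical
  have hcons : ∀ i, ¬ ((∃ a ∈ A, G.Adj a (c i)) ∧ ∃ b ∈ A, G.Adj b (c (i + 1))) := by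
    rintro i ⟨⟨a, ha, hai⟩, b, hb, hbi⟩
    obtain ⟨c', hc', hmap⟩ := exists_cycleGraph_embedding_add_right c i
    refine not_adj_of_adj_zero_five (c := c') (hmap ▸ h) hS ha hb ?_ ?_
    · rwa [hc', zero_add]
    · rwa [hc', add_comm (1 : Fin 5)]
  have hrot : ∀ p : Fin 5 → Bool, (∀ i, ¬ (p i ∧ p (i + 1))) →
      ∃ k, ∀ i, p (i + k) → i ∈ ({0, 2} : Finset (Fin 5)) := by decide
  obtain ⟨k, hk⟩ := hrot (fun i ↦ ∃ a ∈ A, G.Adj a (c i)) (by simpa using hcons)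
  exact h.exists_treeRep k treeRep_cycleGraph_five rfl fun i a ha hai ↦
    hk i (by simpa using ⟨a, ha, hai⟩)

theorem map_eq_seven {c : cycleGraph 7 ↪g G}
    (h : AttachedPairs G (Finset.univ.map c.toEmbedding) S A) (hS : WellCoveredOn G S) :
    Finset.univ.map c.toEmbedding = S := by
  refine Finset.eq_of_subset_of_card_le h.core_subset ?_
  rw [h.card_eq, h.stems_eq_empty, Finset.card_empty, mul_zero, add_zero]
  simp only [Finset.forall_mem_map]
  intro i _ a ha hai
  obtain ⟨c', hc', hmap⟩ := exists_cycleGraph_embedding_add_right c i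
  refine not_adj_zero_seven (c := c') (hmap ▸ h) hS ha ?_
  rwa [hc', zero_add]

end AttachedPairs

theorem OddWellCoveredUnicyclicOn.exists_treeRep_or_eq_cycle (h : OddWellCoveredUnicyclicOn G S) :
    (∃ U U', TreeRep G S U U' ∧ 2 * U.card = S.card + 1) ∨
      ∃ c : cycleGraph 7 ↪g G, Finset.univ.map c.toEmbedding = S := by
  obtain ⟨m, hm, hm4, c, A, hA⟩ := h.exists_attachedPairs
  interval_cases m
  · exact .inl (hA.exists_treeRep_three h.wellCovered)
  · exact absurd hm (by decide)
  · exact .inl (hA.exists_treeRep_five h.wellCovered)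
  · exact absurd hm (by decide)
  · exact .inr ⟨c, hA.map_eq_seven h.wellCovered⟩

end CycleCore

section InducedPathOn

variable {V W : Type*} [DecidableEq V] [DecidableEq W] {G : SimpleGraph V} {H : SimpleGraph W}
  {S U : Finset V} {a b u v : V} {l : ℝ}

/-- The subgraph induced on `U` is a path with end vertices `a` and `b`. -/
inductive InducedPathOn (G : SimpleGraph V) : Finset V → V → V → Prop
  | single (a : V) : InducedPathOn G {a} a a
  | cons {U : Finset V} {u a b : V} (h : InducedPathOn G U a b) (hu : u ∉ U) (hua : G.Adj u a)
      (honly : ∀ z ∈ U, G.Adj u z → z = a) : InducedPathOn G (insert u U) u b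
  | symm {U : Finset V} {a b : V} (h : InducedPathOn G U a b) : InducedPathOn G U b a

namespace InducedPathOn

theorem map (f : G ↪g H) (h : InducedPathOn G U a b) :
    InducedPathOn H (U.map f.toEmbedding) (f a) (f b) := by
  induction h with
  | single a => exact .single (f a)
  | cons _ hu hua honly ih =>
    rw [Finset.map_insert]
    exact ih.cons (by simpa using hu) (f.map_adj_iff.2 hua) (by simpa using honly)
  | symm _ ih => exact ih.symm

theorem ends_mem (h : InducedPathOn G U a b) : a ∈ U ∧ b ∈ U := by
  induction h <;> grind

theorem indepSum_neg_and_erase (h : InducedPathOn G U a b) :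
    indepSum G U (-l) = pathEval l (U.card + 2) ∧
      indepSum G (U.erase a) (-l) = pathEval l (U.card + 1) ∧
      indepSum G (U.erase b) (-l) = pathEval l (U.card + 1) ∧
      indepSum G ((U.erase a).erase b) (-l) = pathEval l U.card := by
  classical
  induction h with
  | single a => simp [indepSum_singleton, pathEval, sub_eq_add_neg]
  | @cons U u a b h hu hua honly ih =>
    obtain ⟨h₀, ha, hb, hab⟩ := ih
    have hmem := h.ends_mem
    have hU : {z ∈ U | ¬ G.Adj u z} = U.erase a := by grind
    have hUb : {z ∈ U.erase b | ¬ G.Adj u z} = (U.erase a).erase b := by grind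
    have hub : u ≠ b := by grind
    rw [Finset.erase_insert hu, Finset.erase_insert_of_ne hub, indepSum_insert hu,
      indepSum_insert (by grind), hU, hUb, Finset.card_insert_of_notMem hu, h₀, ha, hb, hab]
    refine ⟨?_, rfl, ?_, rfl⟩
    · rw [pathEval_add_two l (U.card + 1)]
      ring
    · rw [pathEval_add_two l U.card]
      ring
  | symm _ ih =>
    obtain ⟨h₀, ha, hb, hab⟩ := ih
    exact ⟨h₀, hb, ha, by rwa [Finset.erase_right_comm]⟩

theorem indepSum_neg (h : InducedPathOn G U a b) :
    indepSum G U (-l) = pathEval l (U.card + 2) :=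
  h.indepSum_neg_and_erase.1

end InducedPathOn

/-- The graph induced on `S` is represented by an induced path on `(|S| + 1) / 2` vertices whose
end vertices `a` and `b` are deletable. -/
def HasPathRep (G : SimpleGraph V) (S : Finset V) (a b : V) : Prop :=
  ∃ U U', TreeRep G S U U' ∧ a ∈ U' ∧ b ∈ U' ∧ InducedPathOn G U a b ∧ 2 * U.card = S.card + 1

namespace HasPathRep

theorem symm (h : HasPathRep G S a b) : HasPathRep G S b a :=
  let ⟨U, U', hrep, ha, hb, hU, hcard⟩ := h
  ⟨U, U', hrep, hb, ha, hU.symm, hcard⟩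

theorem map (f : G ↪g H) (h : HasPathRep G S a b) :
    HasPathRep H (S.map f.toEmbedding) (f a) (f b) := by
  obtain ⟨U, U', hrep, ha, hb, hU, hcard⟩ := h
  exact ⟨_, _, hrep.map f, Finset.mem_map_of_mem _ ha, Finset.mem_map_of_mem _ hb, hU.map f,
    by simpa using hcard⟩

theorem insert_pendantPair (h : HasPathRep G S a b) (hp : IsPendantPair G S a u v) :
    HasPathRep G (insert u (insert v S)) u b := by
  obtain ⟨U, U', hrep, ha, hb, hU, hcard⟩ := h
  have hu : u ∉ U := fun huU ↦ hp.stem_notMem (hrep.subset huU)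
  refine ⟨_, _, hrep.insert_pendantPair hp ha, Finset.mem_insert_self u U',
    Finset.mem_insert_of_mem hb,
    hU.cons hu hp.adj_base fun z hz ↦ hp.eq_base_of_adj z (hrep.subset hz), ?_⟩
  rw [Finset.card_insert_of_notMem hu, hp.card_insert_insert]
  omega

theorem indepSum_pos {m : ℕ} (h : HasPathRep G S a b) (hm : 2 * m = S.card + 1) (hl : 0 ≤ l)
    (hpos : 0 < pathEval l (m + 2)) : 0 < indepSum G S (-l / (1 + l)) := by
  obtain ⟨U, U', hrep, -, -, hU, hcard⟩ := h
  obtain rfl : m = U.card := by omega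
  rwa [hrep.indepSum_pos_iff hl, hU.indepSum_neg]

end HasPathRep

theorem hasPathRep_cycleGraph_three : HasPathRep (cycleGraph 3) Finset.univ 0 2 :=
  ⟨_, _, treeRep_cycleGraph_three, by decide, by decide,
    (InducedPathOn.single 2).cons (by decide) (by decide) (by decide), rfl⟩

theorem hasPathRep_cycleGraph_five : HasPathRep (cycleGraph 5) Finset.univ 0 2 :=
  ⟨_, _, treeRep_cycleGraph_five, by decide, by decide,
    ((InducedPathOn.single 2).cons (u := 1) (by decide) (by decide) (by decide)).cons
      (by decide) (by decide) (by decide), rfl⟩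

end InducedPathOn

section SPgraph

variable {g k ℓ : ℕ}

theorem map_univ_eq_filter_val_lt {n : ℕ} (f : Fin g ↪ Fin n) (hf : ∀ i, (f i).val = i.val) :
    Finset.univ.map f = ({i | i.val < g} : Finset (Fin n)) := by
  ext z
  simp only [Finset.mem_map, Finset.mem_univ, true_and, Finset.mem_filter]
  refine ⟨?_, fun hz ↦ ⟨⟨z, hz⟩, Fin.ext (hf _)⟩⟩
  rintro ⟨i, rfl⟩
  exact (hf i).trans_lt i.isLt

theorem exists_cycleGraph_embedding_SPgraph (hg : 3 ≤ g) :
    ∃ c : cycleGraph g ↪g SPgraph g k ℓ, ∀ i, (c i).val = i.val := by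
  obtain ⟨m, rfl⟩ := Nat.exists_eq_add_of_le' hg
  refine ⟨⟨Fin.castLEEmb (by omega), ?_⟩, fun i ↦ rfl⟩
  intro i j
  have hi := i.isLt
  have hj := j.isLt
  simp only [SPgraph, fromRel_adj, cycleGraph_adj_iff_val, ne_eq, Fin.ext_iff,
    Fin.castLEEmb_apply, Fin.val_castLE]
  grind

theorem exists_hasPathRep_SPgraph_core (hg : g = 3 ∨ g = 5) :
    ∃ a b : Fin (g + 2 * k + 2 * ℓ), a.val = 0 ∧ b.val = 2 ∧
      HasPathRep (SPgraph g k ℓ) {i | i.val < g} a b := by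
  obtain ⟨c, hc⟩ := exists_cycleGraph_embedding_SPgraph (show 3 ≤ g by omega) (k := k) (ℓ := ℓ)
  rw [← map_univ_eq_filter_val_lt c.toEmbedding hc]
  rcases hg with rfl | rfl
  · exact ⟨_, _, hc _, hc _, hasPathRep_cycleGraph_three.map c⟩
  · exact ⟨_, _, hc _, hc _, hasPathRep_cycleGraph_five.map c⟩

theorem exists_hasPathRep_SPgraph_left (hg : g = 3 ∨ g = 5) (j : ℕ) (hj : j ≤ k) :
    ∃ a b : Fin (g + 2 * k + 2 * ℓ), a.val = (if j = 0 then 0 else g + 2 * (j - 1)) ∧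
      b.val = 2 ∧ HasPathRep (SPgraph g k ℓ) {i | i.val < g + 2 * j} a b := by
  induction j with
  | zero => exact exists_hasPathRep_SPgraph_core hg
  | succ j ih =>
    obtain ⟨a, b, ha, hb, h⟩ := ih (by omega)
    let u : Fin (g + 2 * k + 2 * ℓ) := ⟨g + 2 * j, by omega⟩
    let v : Fin (g + 2 * k + 2 * ℓ) := ⟨g + 2 * j + 1, by omega⟩
    have hp : IsPendantPair (SPgraph g k ℓ) {i | i.val < g + 2 * j} a u v := by
      split_ifs at ha <;> constructor <;>
        simp only [SPgraph, fromRel_adj, ne_eq, Fin.ext_iff, Finset.mem_filter, Finset.mem_univ,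
          true_and, u, v, ha] <;> grind
    have hinsert : insert u (insert v ({i | i.val < g + 2 * j} : Finset _)) =
        ({i | i.val < g + 2 * (j + 1)} : Finset (Fin (g + 2 * k + 2 * ℓ))) := by
      ext z
      simp [u, v, Fin.ext_iff]
      omega
    exact ⟨u, b, by simp [u], hb, hinsert ▸ h.insert_pendantPair hp⟩

theorem exists_hasPathRep_SPgraph_right (hg : g = 3 ∨ g = 5) (j : ℕ) (hj : j ≤ ℓ) :
    ∃ a b : Fin (g + 2 * k + 2 * ℓ), b.val = (if j = 0 then 2 else g + 2 * k + 2 * (j - 1)) ∧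
      HasPathRep (SPgraph g k ℓ) {i | i.val < g + 2 * k + 2 * j} b a := by
  induction j with
  | zero =>
    obtain ⟨a, b, -, hb, h⟩ := exists_hasPathRep_SPgraph_left hg k le_rfl (ℓ := ℓ)
    exact ⟨a, b, hb, h.symm⟩
  | succ j ih =>
    obtain ⟨a, b, hb, h⟩ := ih (by omega)
    let u : Fin (g + 2 * k + 2 * ℓ) := ⟨g + 2 * k + 2 * j, by omega⟩
    let v : Fin (g + 2 * k + 2 * ℓ) := ⟨g + 2 * k + 2 * j + 1, by omega⟩
    have hp : IsPendantPair (SPgraph g k ℓ) {i | i.val < g + 2 * k + 2 * j} b u v := by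
      split_ifs at hb <;> constructor <;>
        simp only [SPgraph, fromRel_adj, ne_eq, Fin.ext_iff, Finset.mem_filter, Finset.mem_univ,
          true_and, u, v, hb] <;> grind
    have hinsert : insert u (insert v ({i | i.val < g + 2 * k + 2 * j} : Finset _)) =
        ({i | i.val < g + 2 * k + 2 * (j + 1)} : Finset (Fin (g + 2 * k + 2 * ℓ))) := by
      ext z
      simp [u, v, Fin.ext_iff]
      omega
    exact ⟨a, u, by simp [u], hinsert ▸ h.insert_pendantPair hp⟩

theorem exists_hasPathRep_SPgraph (hg : g = 3 ∨ g = 5) (k ℓ : ℕ) :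
    ∃ a b, HasPathRep (SPgraph g k ℓ) Finset.univ a b := by
  obtain ⟨a, b, -, h⟩ := exists_hasPathRep_SPgraph_right hg ℓ le_rfl (k := k)
  exact ⟨b, a, by simpa using h⟩

end SPgraph

section InducedStarOn

variable {V W : Type*} [DecidableEq V] [DecidableEq W] {G : SimpleGraph V} {H : SimpleGraph W}
  {S U : Finset V} {c u v : V} {l : ℝ}

/-- The subgraph induced on `U` is a star with centre `c`. -/
structure InducedStarOn (G : SimpleGraph V) (U : Finset V) (c : V) : Prop where
  center_mem : c ∈ U
  center_adj : ∀ z ∈ U.erase c, G.Adj c z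
  isIndepFinset_erase : IsIndepFinset G (U.erase c)

namespace InducedStarOn

theorem map (f : G ↪g H) (h : InducedStarOn G U c) :
    InducedStarOn H (U.map f.toEmbedding) (f c) where
  center_mem := Finset.mem_map_of_mem _ h.center_mem
  center_adj := by
    intro z hz
    obtain ⟨w, hw, rfl⟩ := Finset.mem_map.1 ((Finset.map_erase f.toEmbedding U c).symm ▸ hz)
    exact f.map_adj_iff.2 (h.center_adj w hw)
  isIndepFinset_erase := by
    have := (isIndepFinset_map_iff f).2 h.isIndepFinset_erase
    rwa [Finset.map_erase] at this

theorem insert_leaf (h : InducedStarOn G U c) (huc : G.Adj u c)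
    (honly : ∀ z ∈ U, G.Adj u z → z = c) : InducedStarOn G (insert u U) c where
  center_mem := Finset.mem_insert_of_mem h.center_mem
  center_adj := by grind [h.center_adj, G.adj_comm]
  isIndepFinset_erase := by
    rw [Finset.erase_insert_of_ne huc.ne, isIndepFinset_insert_iff]
    exact ⟨h.isIndepFinset_erase, by grind⟩

end InducedStarOn

theorem indepSum_of_isIndepFinset {V R : Type*} [CommSemiring R] {G : SimpleGraph V}
    {U : Finset V} (h : IsIndepFinset G U) (x : R) : indepSum G U x = (1 + x) ^ U.card := by
  classical
  induction U using Finset.induction with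
  | empty => simp
  | insert v U hv ih =>
    rw [isIndepFinset_insert_iff] at h
    rw [indepSum_insert_of_forall_not_adj hv h.2, ih h.1, Finset.card_insert_of_notMem hv,
      pow_succ']

theorem InducedStarOn.indepSum_eq {R : Type*} [CommSemiring R] (h : InducedStarOn G U c) (x : R) :
    indepSum G U x = (1 + x) ^ (U.card - 1) + x := by
  classical
  have hfilter : {z ∈ U.erase c | ¬ G.Adj c z} = ∅ :=
    Finset.filter_eq_empty_iff.2 fun z hz ↦ not_not.2 (h.center_adj z hz)
  rw [indepSum_eq_erase_add h.center_mem, hfilter, indepSum_empty, mul_one,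
    indepSum_of_isIndepFinset h.isIndepFinset_erase, Finset.card_erase_of_mem h.center_mem]

/-- The graph induced on `S` is represented by an induced star on `(|S| + 1) / 2` vertices whose
centre `c` is deletable. -/
def HasStarRep (G : SimpleGraph V) (S : Finset V) (c : V) : Prop :=
  ∃ U U', TreeRep G S U U' ∧ c ∈ U' ∧ InducedStarOn G U c ∧ 2 * U.card = S.card + 1

namespace HasStarRep

theorem map (f : G ↪g H) (h : HasStarRep G S c) :
    HasStarRep H (S.map f.toEmbedding) (f c) := by
  obtain ⟨U, U', hrep, hc, hU, hcard⟩ := h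
  exact ⟨_, _, hrep.map f, Finset.mem_map_of_mem _ hc, hU.map f, by simpa using hcard⟩

theorem insert_pendantPair (h : HasStarRep G S c) (hp : IsPendantPair G S c u v) :
    HasStarRep G (insert u (insert v S)) c := by
  obtain ⟨U, U', hrep, hc, hU, hcard⟩ := h
  have hu : u ∉ U := fun huU ↦ hp.stem_notMem (hrep.subset huU)
  refine ⟨_, _, hrep.insert_pendantPair hp hc, Finset.mem_insert_of_mem hc,
    hU.insert_leaf hp.adj_base fun z hz ↦ hp.eq_base_of_adj z (hrep.subset hz), ?_⟩
  rw [Finset.card_insert_of_notMem hu, hp.card_insert_insert]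
  omega

theorem lt_one_and_lt_pow {m : ℕ} (h : HasStarRep G S c) (hm : 2 * m = S.card + 1) (hm2 : 2 ≤ m)
    (hl : 0 ≤ l) (hpos : ∀ t ∈ Set.Icc 0 l, 0 < indepSum G S (-t / (1 + t))) :
    l < 1 ∧ l < (1 - l) ^ (m - 1) := by
  obtain ⟨U, U', hrep, -, hU, hcard⟩ := h
  obtain rfl : m = U.card := by omega
  have hstar : ∀ t ∈ Set.Icc 0 l, t < (1 - t) ^ (U.card - 1) := fun t ht ↦ by
    have := (hrep.indepSum_pos_iff ht.1).1 (hpos t ht)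
    rwa [hU.indepSum_eq, ← sub_eq_add_neg, ← sub_eq_add_neg, sub_pos] at this
  refine ⟨not_le.1 fun h1 ↦ ?_, hstar l ⟨hl, le_rfl⟩⟩
  have := hstar 1 ⟨zero_le_one, h1⟩
  rw [sub_self, zero_pow (by omega)] at this
  exact this.not_gt one_pos

end HasStarRep

theorem hasStarRep_cycleGraph_three : HasStarRep (cycleGraph 3) Finset.univ 0 :=
  ⟨_, _, treeRep_cycleGraph_three, by decide, 
    ⟨by decide, by decide, by unfold IsIndepFinset; decide⟩, rfl⟩

end InducedStarOn

section Mgraph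

variable {n : ℕ}

theorem exists_cycleGraph_embedding_Mgraph (hn : 3 ≤ n) :
    ∃ f : cycleGraph 3 ↪g Mgraph n, ∀ i, (f i).val = i.val := by
  refine ⟨⟨Fin.castLEEmb hn, ?_⟩, fun i ↦ rfl⟩
  intro i j
  have hi := i.isLt
  have hj := j.isLt
  simp only [Mgraph, fromRel_adj, cycleGraph_adj_iff_val, ne_eq, Fin.ext_iff,
    Fin.castLEEmb_apply, Fin.val_castLE]
  grind

theorem exists_hasStarRep_Mgraph_filter_val_lt (j : ℕ) (hj : 2 * j + 3 ≤ n) :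
    ∃ c : Fin n, c.val = 0 ∧ HasStarRep (Mgraph n) {i | i.val < 2 * j + 3} c := by
  induction j with
  | zero =>
    obtain ⟨f, hf⟩ := exists_cycleGraph_embedding_Mgraph (n := n) (by omega)
    have h := hasStarRep_cycleGraph_three.map f
    rw [map_univ_eq_filter_val_lt f.toEmbedding hf] at h
    exact ⟨f 0, hf 0, h⟩
  | succ j ih =>
    obtain ⟨c, hc, h⟩ := ih (by omega)
    let u : Fin n := ⟨2 * j + 3, by omega⟩
    let v : Fin n := ⟨2 * j + 4, by omega⟩
    have hp : IsPendantPair (Mgraph n) {i | i.val < 2 * j + 3} c u v := by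
      constructor <;>
        simp only [Mgraph, fromRel_adj, ne_eq, Fin.ext_iff, Finset.mem_filter, Finset.mem_univ,
          true_and, u, v, hc] <;> grind
    have hinsert : insert u (insert v ({i | i.val < 2 * j + 3} : Finset _)) =
        ({i | i.val < 2 * (j + 1) + 3} : Finset (Fin n)) := by
      ext z
      simp [u, v, Fin.ext_iff]
      omega
    exact ⟨c, hc, hinsert ▸ h.insert_pendantPair hp⟩

theorem exists_hasStarRep_Mgraph (hodd : Odd n) (hn : 3 ≤ n) :
    ∃ c, HasStarRep (Mgraph n) Finset.univ c := by
  obtain ⟨j, rfl⟩ := hodd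
  obtain ⟨c, -, h⟩ := exists_hasStarRep_Mgraph_filter_val_lt (n := 2 * j + 1) (j - 1) (by omega)
  refine ⟨c, ?_⟩
  rwa [show 2 * (j - 1) + 3 = 2 * j + 1 by omega,
    Finset.filter_true_of_mem fun i _ ↦ i.isLt] at h

end Mgraph

section CycleSeven

variable {l : ℝ}

theorem indepSum_cycleGraph_seven_pos (hl : 0 ≤ l) (hpos : 0 < pathEval l 6) :
    0 < indepSum (cycleGraph 7) Finset.univ (-l / (1 + l)) := by
  have hl1 : 0 < 1 + l := by positivity
  have heval : (1 + l) ^ 3 * indepSum (cycleGraph 7) Finset.univ (-l / (1 + l)) =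
      pathEval l 6 + l ^ 3 := by
    rw [indepSum_cycleGraph_seven]
    simp only [pathEval]
    field_simp
    ring
  rw [← mul_pos_iff_of_pos_left (pow_pos hl1 3), heval]
  positivity

theorem pathEval_six_pos_of_lt_pow (hl : 0 ≤ l) (h : l < (1 - l) ^ 3) : 0 < pathEval l 6 := by
  have hcube : 0 ≤ l ^ 3 := pow_nonneg hl 3
  simp only [pathEval]
  linarith

end CycleSeven

section Bounds

variable {V W : Type*} [Fintype V] {G : SimpleGraph V} {n : ℕ}

theorem oddWellCoveredUnicyclicOn_univ (hodd : Odd (Fintype.card V)) (hG : Unicyclic G)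
    (hwc : WellCovered G) : OddWellCoveredUnicyclicOn G Finset.univ where
  odd_card := hodd
  eq_of_closed X _ hX hclosed := by
    obtain ⟨a, ha⟩ := hX
    refine Finset.eq_univ_of_forall fun b ↦ ?_
    obtain ⟨p⟩ := hG.1.preconnected a b
    induction p with
    | nil => exact ha
    | cons hadj _ ih => exact ih (hclosed _ ha _ (Finset.mem_univ _) hadj)
  sum_card_nbrIn := by
    classical
    have hcard : G.edgeFinset.card = Fintype.card V := by
      rw [← hG.2, ← coe_edgeFinset, Set.ncard_coe_finset]
    rw [Finset.card_univ, ← hcard, ← sum_degrees_eq_twice_card_edges]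
    refine Finset.sum_congr rfl fun v _ ↦ congrArg Finset.card ?_
    ext u
    simp [mem_nbrIn]
  wellCovered s t hs ht := by
    classical
    have hmax : ∀ s, IsMaxIndepOn G Finset.univ s → ∀ v ∉ s, ¬ IsIndepFinset G (insert v s) := by
      intro s hs v hv hi
      obtain ⟨u, hu, hvu⟩ := hs.2.2 v (Finset.mem_univ v) hv
      exact (isIndepFinset_insert_iff.1 hi).2 u hu hvu
    exact hwc s t hs.2.1 (by convert hmax s hs) ht.2.1 (by convert hmax t ht)

namespace OddWellCoveredUnicyclicOn

theorem nonempty (h : OddWellCoveredUnicyclicOn G Finset.univ) : Nonempty V :=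
  Fintype.card_pos_iff.1 h.odd_card.pos

theorem exists_treeRep_or_iso_cycleGraph [DecidableEq V]
    (h : OddWellCoveredUnicyclicOn G Finset.univ) :
    (∃ U U', TreeRep G Finset.univ U U' ∧ 2 * U.card = Fintype.card V + 1) ∨
      Nonempty (cycleGraph 7 ≃g G) := by
  refine h.exists_treeRep_or_eq_cycle.imp_right fun ⟨c, hc⟩ ↦ ⟨RelIso.ofSurjective c fun v ↦ ?_⟩
  obtain ⟨i, -, hi⟩ := Finset.mem_map.1 (hc ▸ Finset.mem_univ v)
  exact ⟨i, hi⟩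

theorem xi_le_xi_Mgraph (h : OddWellCoveredUnicyclicOn G Finset.univ) (hcard : Fintype.card V = n)
    (hn : 5 ≤ n) : xi G ≤ xi (Mgraph n) := by
  classical
  have hodd : Odd n := hcard ▸ h.odd_card
  obtain ⟨c, hc⟩ := exists_hasStarRep_Mgraph hodd (by omega)
  obtain ⟨m, hm⟩ : ∃ m, 2 * m = n + 1 := by obtain ⟨j, rfl⟩ := hodd; exact ⟨j + 1, by ring⟩
  have := h.nonempty
  have : Nonempty (Fin n) := ⟨c⟩
  refine xi_le_xi_of_pos_imp_pos_subst fun l hl hpos ↦ ?_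
  obtain ⟨hl1, hlt⟩ := hc.lt_one_and_lt_pow (m := m) (by simpa using hm) (by omega) hl hpos
  obtain ⟨U, U', hrep, hU⟩ | ⟨⟨e⟩⟩ := h.exists_treeRep_or_iso_cycleGraph
  · obtain rfl : m = U.card := by omega
    exact hrep.indepSum_pos_of_lt_pow hl hl1 hlt
  · obtain rfl : m = 4 := by
      have := Fintype.card_congr e.toEquiv
      simp only [Fintype.card_fin] at this
      omega
    rw [← eval_indepPoly, ← indepPoly_congr e, eval_indepPoly]
    exact indepSum_cycleGraph_seven_pos hl (pathEval_six_pos_of_lt_pow hl hlt)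

end OddWellCoveredUnicyclicOn

variable [Fintype W] [DecidableEq W] {H : SimpleGraph W}

theorem HasPathRep.xi_le_xi {a b : W} (hH : HasPathRep H Finset.univ a b)
    (h : OddWellCoveredUnicyclicOn G Finset.univ) (hcard : Fintype.card W = Fintype.card V)
    (h7 : Fintype.card V ≠ 7) : xi H ≤ xi G := by
  classical
  have := h.nonempty
  have : Nonempty W := ⟨a⟩
  obtain ⟨U, U', hrep, hU⟩ | ⟨⟨e⟩⟩ := h.exists_treeRep_or_iso_cycleGraph
  · refine xi_le_xi_of_pos_imp_pos_subst fun l hl hpos ↦ ?_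
    exact hH.indepSum_pos (by rwa [Finset.card_univ, hcard]) hl (hrep.pathEval_pos hl hpos)
  · exact absurd (Fintype.card_congr e.toEquiv) (by simpa using h7.symm)

namespace OddWellCoveredUnicyclicOn

theorem xi_cycleGraph_seven_le (h : OddWellCoveredUnicyclicOn G Finset.univ)
    (hcard : Fintype.card V = 7) : xi (cycleGraph 7) ≤ xi G := by
  classical
  have := h.nonempty
  obtain ⟨U, U', hrep, hU⟩ | ⟨⟨e⟩⟩ := h.exists_treeRep_or_iso_cycleGraph
  · refine xi_le_xi_of_pos_imp_pos_subst fun l hl hpos ↦ ?_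
    have hpath := hrep.pathEval_pos hl hpos
    rw [show U.card = 4 by omega] at hpath
    exact indepSum_cycleGraph_seven_pos hl hpath
  · exact (xi_congr e).le

theorem xi_cycleGraph_le (h : OddWellCoveredUnicyclicOn G Finset.univ)
    (hcard : Fintype.card V = n) (hn : 5 ≤ n) (hn7 : n ≤ 7) : xi (cycleGraph n) ≤ xi G := by
  have hodd : Odd n := hcard ▸ h.odd_card
  interval_cases n
  · exact hasPathRep_cycleGraph_five.xi_le_xi h (by simp [hcard]) (by omega)
  · exact absurd hodd (by decide)
  · exact h.xi_cycleGraph_seven_le hcard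

theorem xi_SPgraph_le (h : OddWellCoveredUnicyclicOn G Finset.univ) {g k ℓ : ℕ}
    (hg : g = 3 ∨ g = 5) (hcard : Fintype.card V = g + 2 * k + 2 * ℓ)
    (h7 : Fintype.card V ≠ 7) : xi (SPgraph g k ℓ) ≤ xi G := by
  obtain ⟨a, b, hab⟩ := exists_hasPathRep_SPgraph hg k ℓ
  exact hab.xi_le_xi h (by simp [hcard]) h7

end OddWellCoveredUnicyclicOn

end Bounds

/-- Let `n` be odd and `G` a connected well-covered unicyclic graph of order
`n`. If `5 ≤ n ≤ 7` then `ξ(C_n) ≤ ξ(G) ≤ ξ(M_n)`; if `n ≥ 9` then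
`ξ(H) ≤ ξ(G) ≤ ξ(M_n)` for every graph `H` of order `n` in the family `S_P`. -/
theorem stmt13 {V : Type*} [Fintype V] (n : ℕ) (hodd : Odd n)
    (G : SimpleGraph V) (hcard : Fintype.card V = n)
    (hG : Unicyclic G) (hwc : WellCovered G) :
    (5 ≤ n → n ≤ 7 → xi (cycleGraph n) ≤ xi G ∧ xi G ≤ xi (Mgraph n)) ∧
    (9 ≤ n → ∀ (W : Type) [Fintype W] (H : SimpleGraph W),
      (∃ g k l : ℕ, (g = 3 ∨ g = 5) ∧ 1 ≤ k + l ∧ g + 2*k + 2*l = n ∧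
        Nonempty (H ≃g SPgraph g k l)) → xi H ≤ xi G ∧ xi G ≤ xi (Mgraph n)) := by
  have h := oddWellCoveredUnicyclicOn_univ (by rwa [hcard]) hG hwc
  refine ⟨fun h5 h7 ↦ ⟨h.xi_cycleGraph_le hcard h5 h7, h.xi_le_xi_Mgraph hcard h5⟩,
    fun h9 W _ H ↦ ?_⟩
  rintro ⟨g, k, l, hg, -, hn, ⟨e⟩⟩
  refine ⟨?_, h.xi_le_xi_Mgraph hcard (by omega)⟩
  rw [xi_congr e]
  exact h.xi_SPgraph_le hg (hcard.trans hn.symm) (by omega)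
end

section
/- For every integer n ≥ 6, I(P_n*,x) = I(G_{2n},x) as polynomials. -/
open Polynomial SimpleGraph

/-!
Call `inl i` and `inr i` the `i`-th rung of `ℕ ⊕ ℕ`, and let `F a` be the independence polynomial
of the copy of `P_{n-a}*` on the rungs `a, …, n - 1`. Deleting the end of the path gives
`F a = (1 + X) F (a + 1) + X (1 + X) F (a + 2)`.

In `G_{2n}`, delete `v_3`. What remains is an isolated vertex, two isolated edges and the branch
`B` at `v_4`. The point is that `B` is again `P_{n-3}*`, along the path `x_1, v_5, v_6, …, v_n` with
`v_4` as the pendant vertex of `v_5`. If `N[v_3]` is deleted instead, two isolated vertices and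
`B - v_4` remain, and deleting `v_4` from `B` gives `I(B - v_4) = F 3 - X (1 + 2 X) F 5`. Hence
`I(G_{2n}) = (1 + X) (1 + 2 X) ^ 2 F 3 + X (1 + X) ^ 2 (F 3 - X (1 + 2 X) F 5)`,
which the recurrence turns into `F 0 = I(P_n*)`.
-/

open Finset

section IndepPolyOn

variable {V W : Type*} {G : SimpleGraph V} {H : SimpleGraph W}

open Classical in
/-- The independence polynomial of the subgraph of `G` induced on the finite vertex set `S`. It is
indexed by subsets of `V`, so that deleting vertices does not change the vertex type. -/
noncomputable def indepPolyOn (G : SimpleGraph V) (S : Finset V) : ℝ[X] :=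
  ∑ s ∈ S.powerset, if IsIndepFinset G s then X ^ #s else 0

lemma indepPolyOn_univ [Fintype V] (G : SimpleGraph V) : indepPolyOn G univ = indepPoly G := by
  rw [indepPolyOn, powerset_univ, indepPoly]

lemma indepPolyOn_map (f : V ↪ W) {S : Finset V}
    (hf : ∀ u ∈ S, ∀ v ∈ S, H.Adj (f u) (f v) ↔ G.Adj u v) :
    indepPolyOn H (S.map f) = indepPolyOn G S := by
  have indep_map_iff : ∀ s ⊆ S, IsIndepFinset H (s.map f) ↔ IsIndepFinset G s := by
    intro s hs
    simp only [IsIndepFinset, forall_mem_map]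
    exact forall₄_congr fun u hu v hv => not_congr (hf u (hs hu) v (hs hv))
  classical
  symm
  refine sum_nbij (·.map f) (fun s hs => ?_) (Finset.map_injective f).injOn (fun t ht => ?_)
    (fun s hs => ?_)
  · exact mem_powerset.2 (map_subset_map.2 (mem_powerset.1 hs))
  · obtain ⟨s, hs, rfl⟩ := subset_map_iff.1 (mem_powerset.1 ht)
    exact ⟨s, mem_powerset.2 hs, rfl⟩
  · exact if_congr (indep_map_iff s (mem_powerset.1 hs)).symm (by rw [card_map]) rfl

lemma isIndepFinset_insert [DecidableEq V] {v : V} {s : Finset V} :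
    IsIndepFinset G (insert v s) ↔ IsIndepFinset G s ∧ ∀ u ∈ s, ¬ G.Adj v u := by
  simp only [IsIndepFinset, forall_mem_insert, G.irrefl, not_false_eq_true, true_and]
  grind [G.adj_comm]

lemma indepPolyOn_insert [DecidableEq V] [DecidableRel G.Adj] {v : V} {S : Finset V}
    (hv : v ∉ S) :
    indepPolyOn G (insert v S) =
      indepPolyOn G S + X * indepPolyOn G {u ∈ S | ¬ G.Adj v u} := by
  classical
  have indep_insert : {t ∈ S.powerset | IsIndepFinset G (insert v t)} =
      {t ∈ powerset {u ∈ S | ¬ G.Adj v u} | IsIndepFinset G t} := by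
    ext t
    simp only [mem_filter, mem_powerset, isIndepFinset_insert, subset_iff]
    grind
  rw [indepPolyOn, sum_powerset_insert hv, indepPolyOn, indepPolyOn]
  congr 1
  rw [← sum_filter, ← sum_filter, indep_insert, mul_sum]
  refine sum_congr rfl fun t ht => ?_
  have hvt : v ∉ t := fun h => hv (by grind)
  rw [card_insert_of_notMem hvt, pow_succ']

lemma indepPolyOn_eq_erase_add [DecidableEq V] [DecidableRel G.Adj] {v : V} {S : Finset V}
    (hv : v ∈ S) :
    indepPolyOn G S = indepPolyOn G (S.erase v) +
      X * indepPolyOn G {u ∈ S.erase v | ¬ G.Adj v u} := by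
  rw [← indepPolyOn_insert (notMem_erase v S), insert_erase hv]

lemma indepPolyOn_insert_of_isolated [DecidableEq V] {v : V} {S : Finset V} (hv : v ∉ S)
    (hvS : ∀ u ∈ S, ¬ G.Adj v u) :
    indepPolyOn G (insert v S) = (1 + X) * indepPolyOn G S := by
  classical
  rw [indepPolyOn_insert hv, filter_true_of_mem hvS]
  ring

lemma indepPolyOn_insert_insert_of_isolated_edge [DecidableEq V] {v w : V} {S : Finset V}
    (hvw : G.Adj v w) (hv : v ∉ S) (hw : w ∉ S)
    (hvS : ∀ u ∈ S, ¬ G.Adj v u) (hwS : ∀ u ∈ S, ¬ G.Adj w u) :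
    indepPolyOn G (insert v (insert w S)) = (1 + 2 * X) * indepPolyOn G S := by
  classical
  have hv' : v ∉ insert w S := by simp [hvw.ne, hv]
  rw [indepPolyOn_insert hv', indepPolyOn_insert_of_isolated hw hwS, filter_insert,
    if_neg (not_not.2 hvw), filter_true_of_mem hvS]
  ring

end IndepPolyOn

section Corona

variable {V W : Type*} {G : SimpleGraph V} {H : SimpleGraph W}

@[simp] lemma corona_adj_inl_inl {u v : V} :
    (corona G).Adj (.inl u) (.inl v) ↔ G.Adj u v := by
  simpa [corona, G.adj_comm v u] using G.ne_of_adj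

@[simp] lemma corona_adj_inl_inr {u v : V} : (corona G).Adj (.inl u) (.inr v) ↔ u = v := by
  simp [corona]

@[simp] lemma corona_adj_inr_inl {u v : V} : (corona G).Adj (.inr u) (.inl v) ↔ u = v := by
  simp [corona, eq_comm]

@[simp] lemma corona_not_adj_inr_inr {u v : V} : ¬ (corona G).Adj (.inr u) (.inr v) := by
  simp [corona]

lemma indepPoly_corona_eq_of_embedding [Fintype V] (f : G ↪g H) :
    indepPoly (corona G) = indepPolyOn (corona H)
      ((univ.map f.toEmbedding).disjSum (univ.map f.toEmbedding)) := by
  have image_eq : (univ.map f.toEmbedding).disjSum (univ.map f.toEmbedding) =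
      univ.map (f.toEmbedding.sumMap f.toEmbedding) := by
    ext (w | w) <;> simp
  rw [image_eq, indepPolyOn_map (G := corona G), indepPolyOn_univ]
  rintro (u | u) - (v | v) - <;> simp

lemma indepPolyOn_corona_insert_leaf [DecidableEq V] {u v : V} {s : Finset V}
    (hvu : G.Adj v u) (hv : v ∉ s) (hu : u ∉ s) (hvs : ∀ w ∈ s, ¬ G.Adj v w) :
    indepPolyOn (corona G) ((insert v (insert u s)).disjSum (insert v (insert u s))) =
      (1 + X) * indepPolyOn (corona G) ((insert u s).disjSum (insert u s)) +
        X * (1 + X) * indepPolyOn (corona G) (s.disjSum s) := by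
  classical
  have hne : v ≠ u := hvu.ne
  have insert_eq : (insert v (insert u s)).disjSum (insert v (insert u s)) =
      insert (.inl v) (insert (.inr v) ((insert u s).disjSum (insert u s))) := by
    ext (w | w) <;> simp
  have nonneighbors_eq : {w ∈ insert (.inr v) ((insert u s).disjSum (insert u s)) |
      ¬ (corona G).Adj (.inl v) w} = insert (.inr u) (s.disjSum s) := by
    ext (w | w) <;>
      grind [inl_mem_disjSum, inr_mem_disjSum, corona_adj_inl_inl, corona_adj_inl_inr]
  have pendant_isolated : indepPolyOn (corona G)
      (insert (.inr v) ((insert u s).disjSum (insert u s))) =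
        (1 + X) * indepPolyOn (corona G) ((insert u s).disjSum (insert u s)) := by
    apply indepPolyOn_insert_of_isolated <;>
      grind [mem_disjSum, corona_adj_inr_inl, corona_not_adj_inr_inr]
  have pendant_isolated' : indepPolyOn (corona G) (insert (.inr u) (s.disjSum s)) =
      (1 + X) * indepPolyOn (corona G) (s.disjSum s) := by
    apply indepPolyOn_insert_of_isolated <;>
      grind [mem_disjSum, corona_adj_inr_inl, corona_not_adj_inr_inr]
  rw [insert_eq, indepPolyOn_insert (by simp [hne, hv]), nonneighbors_eq, pendant_isolated,
    pendant_isolated']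
  ring

end Corona

/-- The vertices `inl i` and `inr i` of `ℕ ⊕ ℕ` with `a ≤ i < n`. -/
def rungs (a n : ℕ) : Finset (ℕ ⊕ ℕ) := (Ico a n).disjSum (Ico a n)

lemma mem_rungs {a n : ℕ} {v : ℕ ⊕ ℕ} : v ∈ rungs a n ↔ a ≤ v.elim id id ∧ v.elim id id < n := by
  cases v <;> simp [rungs]

lemma hasse_nat_adj {i j : ℕ} : (hasse ℕ).Adj i j ↔ i + 1 = j ∨ j + 1 = i := by
  simp [hasse_adj, Nat.covBy_iff_add_one_eq]

/-- The path `P_n` as the initial segment of the one-way infinite path. -/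
def pathGraphEmbedding (n : ℕ) : pathGraph n ↪g hasse ℕ where
  toEmbedding := Fin.valEmbedding
  map_rel_iff' := by simp [pathGraph_adj]

lemma indepPoly_corona_pathGraph (n : ℕ) :
    indepPoly (corona (pathGraph n)) = indepPolyOn (corona (hasse ℕ)) (rungs 0 n) := by
  have image_eq : univ.map (pathGraphEmbedding n).toEmbedding = Ico 0 n := by
    ext i
    simp [pathGraphEmbedding]
  rw [indepPoly_corona_eq_of_embedding (pathGraphEmbedding n), image_eq, rungs]

lemma indepPolyOn_corona_hasse_rungs {a n : ℕ} (h : a + 2 ≤ n) :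
    indepPolyOn (corona (hasse ℕ)) (rungs a n) =
      (1 + X) * indepPolyOn (corona (hasse ℕ)) (rungs (a + 1) n) +
        X * (1 + X) * indepPolyOn (corona (hasse ℕ)) (rungs (a + 2) n) := by
  have Ico_left : Ico a n = insert a (Ico (a + 1) n) := by grind
  have Ico_left' : Ico (a + 1) n = insert (a + 1) (Ico (a + 2) n) := by grind
  rw [rungs, rungs, rungs, Ico_left, Ico_left']
  apply indepPolyOn_corona_insert_leaf <;> grind [hasse_nat_adj]

/-- The infinite tree whose restriction to `rungs 0 n` is `G_{2n}` for every `n ≥ 5`. As in `Gtree`,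
the path vertex `v_{i+1}` is `inl i`, the vertices `z_1, y_1, y_2, x_1, x_2` are `inr 0, …, inr 4`,
and `w_{i+1}` is `inr i` for `i ≥ 5`. -/
def infiniteGtree : SimpleGraph (ℕ ⊕ ℕ) :=
  SimpleGraph.fromRel fun a b =>
    match a, b with
    | .inl i, .inl j => i + 1 = j
    | .inl i, .inr j => (i = 2 ∧ (j = 0 ∨ j = 1)) ∨ (i = 4 ∧ j = 3) ∨ (5 ≤ i ∧ i = j)
    | .inr i, .inr j => (i = 1 ∧ j = 2) ∨ (i = 3 ∧ j = 4)
    | _, _ => False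

/-- The inclusion of the vertices of `Gtree n` into those of `infiniteGtree`. -/
def gtreeEmbedding (n : ℕ) : Fin (2 * n) ↪ ℕ ⊕ ℕ where
  toFun i := if i.val < n then .inl i.val else .inr (i.val - n)
  inj' i j := by grind

lemma gtreeEmbedding_apply (n : ℕ) (i : Fin (2 * n)) :
    gtreeEmbedding n i = if i.val < n then .inl i.val else .inr (i.val - n) := rfl

lemma map_gtreeEmbedding_univ (n : ℕ) : univ.map (gtreeEmbedding n) = rungs 0 n := by
  ext (i | i) <;> simp only [mem_map, mem_univ, true_and]
  · exact ⟨by grind [gtreeEmbedding_apply, mem_rungs], fun hi =>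
      ⟨⟨i, by grind [mem_rungs]⟩, by grind [gtreeEmbedding_apply, mem_rungs]⟩⟩
  · exact ⟨by grind [gtreeEmbedding_apply, mem_rungs], fun hi =>
      ⟨⟨n + i, by grind [mem_rungs]⟩, by grind [gtreeEmbedding_apply, mem_rungs]⟩⟩

lemma infiniteGtree_adj_gtreeEmbedding {n : ℕ} (hn : 5 ≤ n) (i j : Fin (2 * n)) :
    infiniteGtree.Adj (gtreeEmbedding n i) (gtreeEmbedding n j) ↔ (Gtree n).Adj i j := by
  simp only [gtreeEmbedding_apply, Gtree, fromRel_adj, ne_eq, Fin.ext_iff]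
  split_ifs <;> grind (splits := 30) [infiniteGtree, fromRel_adj]

lemma indepPoly_Gtree {n : ℕ} (hn : 5 ≤ n) :
    indepPoly (Gtree n) = indepPolyOn infiniteGtree (rungs 0 n) := by
  rw [← map_gtreeEmbedding_univ, indepPolyOn_map (G := Gtree n), indepPolyOn_univ]
  exact fun i _ j _ => infiniteGtree_adj_gtreeEmbedding hn i j

lemma indepPolyOn_infiniteGtree_rungs_five_eq_corona (n : ℕ) :
    indepPolyOn infiniteGtree (rungs 5 n) = indepPolyOn (corona (hasse ℕ)) (rungs 5 n) := by
  have h := indepPolyOn_map (G := corona (hasse ℕ)) (H := infiniteGtree)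
    (.refl _) (S := rungs 5 n) ?_
  · rwa [map_refl] at h
  rintro (i | i) hi (j | j) hj <;>
    grind [Function.Embedding.refl_apply, infiniteGtree, corona, hasse_nat_adj, fromRel_adj,
      mem_rungs]

/-- The relabelling under which the branch of `G_{2n}` at `v_4` becomes `P_{n-3}*`: it sends the
first path vertex `inl 3` to `x_1`, its pendant vertex `inr 3` to `x_2`, and the pendant vertex
`inr 4` of the second path vertex `v_5` to `v_4`. -/
def branchPerm : Equiv.Perm (ℕ ⊕ ℕ) :=
  Equiv.swap (.inl 3) (.inr 3) * Equiv.swap (.inr 3) (.inr 4)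

lemma branchPerm_apply (u : ℕ ⊕ ℕ) :
    branchPerm u = Equiv.swap (.inl 3) (.inr 3) (Equiv.swap (.inr 3) (.inr 4) u) := rfl

lemma infiniteGtree_adj_branchPerm {n : ℕ} {u v : ℕ ⊕ ℕ} (hu : u ∈ rungs 3 n)
    (hv : v ∈ rungs 3 n) :
    infiniteGtree.Adj (branchPerm u) (branchPerm v) ↔ (corona (hasse ℕ)).Adj u v := by
  rcases u with i | i <;> rcases v with j | j <;>
    simp only [branchPerm_apply, Equiv.swap_apply_def] <;>
    grind (splits := 20) [infiniteGtree, fromRel_adj, hasse_nat_adj, mem_rungs, corona_adj_inl_inl,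
      corona_adj_inl_inr, corona_adj_inr_inl, corona_not_adj_inr_inr]

lemma map_branchPerm_rungs_three {n : ℕ} (hn : 5 ≤ n) :
    (rungs 3 n).map branchPerm.toEmbedding = rungs 3 n := by
  refine map_perm fun u hu => ?_
  rcases u with i | i <;> grind [branchPerm_apply, mem_rungs]

lemma indepPolyOn_infiniteGtree_rungs_three_eq_corona {n : ℕ} (hn : 5 ≤ n) :
    indepPolyOn infiniteGtree (rungs 3 n) = indepPolyOn (corona (hasse ℕ)) (rungs 3 n) := by
  conv_lhs => rw [← map_branchPerm_rungs_three hn]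
  exact indepPolyOn_map _ fun u hu v hv => infiniteGtree_adj_branchPerm hu hv

lemma indepPolyOn_infiniteGtree_rungs_three_eq_erase_add {n : ℕ} (hn : 5 ≤ n) :
    indepPolyOn infiniteGtree (rungs 3 n) =
      indepPolyOn infiniteGtree ((rungs 3 n).erase (.inl 3)) +
        X * ((1 + 2 * X) * indepPolyOn infiniteGtree (rungs 5 n)) := by
  classical
  have nonneighbors_eq : {u ∈ (rungs 3 n).erase (.inl 3) | ¬ infiniteGtree.Adj (.inl 3) u} =
      insert (.inr 3) (insert (.inr 4) (rungs 5 n)) := by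
    ext (i | i) <;> grind [infiniteGtree, fromRel_adj, mem_rungs]
  have edge_isolated : indepPolyOn infiniteGtree (insert (.inr 3) (insert (.inr 4) (rungs 5 n))) =
      (1 + 2 * X) * indepPolyOn infiniteGtree (rungs 5 n) := by
    apply indepPolyOn_insert_insert_of_isolated_edge <;>
      grind [infiniteGtree, fromRel_adj, mem_rungs]
  rw [indepPolyOn_eq_erase_add (v := .inl 3) (by grind [mem_rungs]), nonneighbors_eq, edge_isolated]

lemma indepPolyOn_infiniteGtree_rungs_zero_erase {n : ℕ} (hn : 5 ≤ n) :
    indepPolyOn infiniteGtree ((rungs 0 n).erase (.inl 2)) =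
      (1 + X) * (1 + 2 * X) ^ 2 * indepPolyOn infiniteGtree (rungs 3 n) := by
  have components : (rungs 0 n).erase (.inl 2) =
      insert (.inr 0) (insert (.inl 0) (insert (.inl 1)
        (insert (.inr 1) (insert (.inr 2) (rungs 3 n))))) := by
    ext (i | i) <;> grind [mem_rungs]
  rw [components, indepPolyOn_insert_of_isolated, indepPolyOn_insert_insert_of_isolated_edge,
    indepPolyOn_insert_insert_of_isolated_edge]
  · ring
  all_goals grind [infiniteGtree, fromRel_adj, mem_rungs]

lemma indepPolyOn_infiniteGtree_rungs_zero {n : ℕ} (hn : 5 ≤ n) :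
    indepPolyOn infiniteGtree (rungs 0 n) =
      (1 + X) * (1 + 2 * X) ^ 2 * indepPolyOn infiniteGtree (rungs 3 n) +
        X * ((1 + X) ^ 2 * indepPolyOn infiniteGtree ((rungs 3 n).erase (.inl 3))) := by
  classical
  have nonneighbors_eq : {u ∈ (rungs 0 n).erase (.inl 2) | ¬ infiniteGtree.Adj (.inl 2) u} =
      insert (.inl 0) (insert (.inr 2) ((rungs 3 n).erase (.inl 3))) := by
    ext (i | i) <;> grind [infiniteGtree, fromRel_adj, mem_rungs]
  have vertices_isolated : indepPolyOn infiniteGtree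
      (insert (.inl 0) (insert (.inr 2) ((rungs 3 n).erase (.inl 3)))) =
        (1 + X) ^ 2 * indepPolyOn infiniteGtree ((rungs 3 n).erase (.inl 3)) := by
    rw [indepPolyOn_insert_of_isolated, indepPolyOn_insert_of_isolated]
    · ring
    all_goals grind [infiniteGtree, fromRel_adj, mem_rungs]
  rw [indepPolyOn_eq_erase_add (v := .inl 2) (by grind [mem_rungs]), nonneighbors_eq,
    vertices_isolated, indepPolyOn_infiniteGtree_rungs_zero_erase hn]

theorem stmt14_general (n : ℕ) (hn : 5 ≤ n) :
    indepPoly (corona (pathGraph n)) = indepPoly (Gtree n) := by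
  rw [indepPoly_corona_pathGraph, indepPoly_Gtree hn]
  have star (a : ℕ) (h : a + 2 ≤ n) := indepPolyOn_corona_hasse_rungs h
  have tree := indepPolyOn_infiniteGtree_rungs_zero hn
  have branch := indepPolyOn_infiniteGtree_rungs_three_eq_erase_add hn
  rw [indepPolyOn_infiniteGtree_rungs_three_eq_corona hn] at tree branch
  rw [indepPolyOn_infiniteGtree_rungs_five_eq_corona] at branch
  rw [tree, eq_sub_of_add_eq branch.symm, star 0 (by omega), star 1 (by omega),
    star 2 (by omega), star 3 (by omega)]
  ring

/-- For every `n ≥ 6`, `I(P_n*, x) = I(G_{2n}, x)`. -/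
theorem stmt14 (n : ℕ) (hn : 6 ≤ n) :
    indepPoly (corona (pathGraph n)) = indepPoly (Gtree n) :=
  stmt14_general n (by omega)
end
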